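/- arXiv:1211.1299 — 2 statements merged into one kernel-verified Lean document; each statement's English description precedes it below -/
import Mathlib

section
/- For two gluable t-boundaried bipartite incidence graphs G and H (two-colored, with color classes forming independent sets), the hypergraph obtained from the glued graph equals the glued hypergraphs: H(G ⊕ H) = H(G) ⊕' H(H), where ⊕ is graph gluing and ⊕' is hypergraph gluing. -/
/-- A `t`-boundaried graph with vertex colors in `C`: a graph together with `t`
distinguished boundary vertices labeled `1, …, t` and a vertex coloring. -/
structure BGraph (t : ℕ) (C : Type) where
  V : Type
  graph : SimpleGraph V
  color : V → C
  bnd : Fin t → V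

/-- Two `t`-boundaried colored graphs are color-compatible if boundary vertices
with the same label have the same color. -/
def ColorCompat {t : ℕ} {C : Type} (G H : BGraph t C) : Prop :=
  ∀ i, G.color (G.bnd i) = H.color (H.bnd i)

/-- The canonical map from the vertices of `H` into the glued graph `G ⊕ H`:
boundary vertices of `H` are identified with the equally labeled boundary
vertices of `G`. -/
noncomputable def glueMap {t : ℕ} {C : Type} (G H : BGraph t C) (v : H.V) :
    G.V ⊕ {v : H.V // v ∉ Set.range H.bnd} :=
  open Classical in
  if h : ∃ i, H.bnd i = v then Sum.inl (G.bnd h.choose)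
  else Sum.inr ⟨v, fun hv => h hv⟩

/-- Gluing of two `t`-boundaried colored graphs: disjoint union, identifying
equally labeled boundary vertices (colors and boundary inherited from `G`). -/
noncomputable def glueGraph {t : ℕ} {C : Type} (G H : BGraph t C) : BGraph t C where
  V := G.V ⊕ {v : H.V // v ∉ Set.range H.bnd}
  graph := SimpleGraph.fromRel (fun x y =>
    (∃ u v, x = Sum.inl u ∧ y = Sum.inl v ∧ G.graph.Adj u v) ∨
    (∃ u v, x = glueMap G H u ∧ y = glueMap G H v ∧ H.graph.Adj u v))
  color := fun x => x.elim G.color (fun v => H.color v.1)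
  bnd := fun i => Sum.inl (G.bnd i)

/-- Isomorphism of colored graphs: a bijection of the vertices preserving
adjacency and colors (boundary labels are ignored). -/
def CIso {t : ℕ} {C : Type} (G H : BGraph t C) : Prop :=
  ∃ e : G.V ≃ H.V,
    (∀ u v, G.graph.Adj u v ↔ H.graph.Adj (e u) (e v)) ∧
    ∀ v, H.color (e v) = G.color v

/-- A `t`-boundaried hypergraph: vertices, hyperedges, an incidence relation,
and `t` labeled boundary objects, each of which is a vertex or a hyperedge. -/
structure BHyp (t : ℕ) where
  V : Type
  E : Type
  mem : V → E → Prop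
  bnd : Fin t → V ⊕ E

/-- Two `t`-boundaried hypergraphs are gluable if no vertex of one carries the
label of a hyperedge of the other. -/
def Gluable {t : ℕ} (G H : BHyp t) : Prop :=
  ∀ i, (G.bnd i).isLeft = (H.bnd i).isLeft

/-- The map sending a vertex of `H` to the corresponding vertex of `G ⊕ H`. -/
noncomputable def glueMapV {t : ℕ} (G H : BHyp t) (hgl : Gluable G H) (v : H.V) :
    G.V ⊕ {v : H.V // ∀ i, H.bnd i ≠ Sum.inl v} :=
  open Classical in
  if h : ∃ i, H.bnd i = Sum.inl v then
    Sum.inl ((G.bnd h.choose).getLeft (by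
      have h1 := hgl h.choose
      rw [h.choose_spec] at h1
      simpa using h1))
  else Sum.inr ⟨v, fun i hi => h ⟨i, hi⟩⟩

/-- The map sending a hyperedge of `H` to the corresponding hyperedge of `G ⊕ H`. -/
noncomputable def glueMapE {t : ℕ} (G H : BHyp t) (hgl : Gluable G H) (e : H.E) :
    G.E ⊕ {e : H.E // ∀ i, H.bnd i ≠ Sum.inr e} :=
  open Classical in
  if h : ∃ i, H.bnd i = Sum.inr e then
    Sum.inl ((G.bnd h.choose).getRight (by
      have h1 := hgl h.choose
      rw [h.choose_spec] at h1
      cases hgb : G.bnd h.choose with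
      | inl a => rw [hgb] at h1; simp at h1
      | inr b => simp))
  else Sum.inr ⟨e, fun i hi => h ⟨i, hi⟩⟩

/-- Gluing of two gluable `t`-boundaried hypergraphs: disjoint union,
identifying equally labeled boundary vertices and replacing equally labeled
boundary hyperedges by their union. -/
noncomputable def glueHyp {t : ℕ} (G H : BHyp t) (hgl : Gluable G H) : BHyp t where
  V := G.V ⊕ {v : H.V // ∀ i, H.bnd i ≠ Sum.inl v}
  E := G.E ⊕ {e : H.E // ∀ i, H.bnd i ≠ Sum.inr e}
  mem := fun x y =>
    (∃ v e, x = Sum.inl v ∧ y = Sum.inl e ∧ G.mem v e) ∨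
    (∃ v e, H.mem v e ∧ x = glueMapV G H hgl v ∧ y = glueMapE G H hgl e)
  bnd := fun i => (G.bnd i).map Sum.inl Sum.inl

/-- A label-preserving isomorphism of `t`-boundaried hypergraphs. -/
structure BHypIso {t : ℕ} (G H : BHyp t) where
  eV : G.V ≃ H.V
  eE : G.E ≃ H.E
  mem_iff : ∀ v e, G.mem v e ↔ H.mem (eV v) (eE e)
  bnd_eq : ∀ i, H.bnd i = (G.bnd i).map eV eE
/-- A `t`-boundaried graph colored with two colors (`false` for vertex-side,
`true` for hyperedge-side) is bipartite if both color classes are independent. -/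
def Bipartite2 {t : ℕ} (G : BGraph t Bool) : Prop :=
  ∀ u v, G.graph.Adj u v → G.color u ≠ G.color v

/-- The `t`-boundaried hypergraph represented by a 2-colored `t`-boundaried
(incidence) graph: vertices are the color-`false` vertices, hyperedges are the
neighborhoods of the color-`true` vertices; boundary labels are inherited. -/
noncomputable def hyperg {t : ℕ} (G : BGraph t Bool) : BHyp t where
  V := {v : G.V // G.color v = false}
  E := {w : G.V // G.color w = true}
  mem := fun v w => G.graph.Adj v.1 w.1
  bnd := fun i =>
    if h : G.color (G.bnd i) = false then Sum.inl ⟨G.bnd i, h⟩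
    else Sum.inr ⟨G.bnd i, by revert h; cases G.color (G.bnd i) <;> simp⟩

/-!
Every vertex of `G ⊕ H` is either a vertex of `G` or a vertex of `H` off the boundary, and gluing
preserves colors. Hence the color-`false` vertices of `G ⊕ H` are exactly the vertices of
`H(G) ⊕' H(H)`, and the color-`true` ones are its hyperedges. An edge of `G ⊕ H` between the two
color classes comes from an edge of `G` or of `H`, again between the two color classes, so adjacency
across them is the incidence relation of `H(G) ⊕' H(H)`.
-/

theorem choose_congr {α : Sort*} {p q : α → Prop} (hpq : ∀ a, p a ↔ q a) (hp : ∃ a, p a)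
    (hq : ∃ a, q a) : hp.choose = hq.choose := by
  obtain rfl : p = q := funext fun a => propext (hpq a)
  rfl

section BGraph

variable {t : ℕ} {C : Type} {G H : BGraph t C}

theorem glueGraph_adj {x y : (glueGraph G H).V} :
    (glueGraph G H).graph.Adj x y ↔ x ≠ y ∧
      ((∃ u v, x = Sum.inl u ∧ y = Sum.inl v ∧ G.graph.Adj u v) ∨
        ∃ u v, x = glueMap G H u ∧ y = glueMap G H v ∧ H.graph.Adj u v) := by
  refine (SimpleGraph.fromRel_adj _ x y).trans (and_congr_right fun _ => or_iff_left_of_imp ?_)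
  rintro (⟨u, v, hu, hv, h⟩ | ⟨u, v, hu, hv, h⟩)
  · exact Or.inl ⟨v, u, hv, hu, h.symm⟩
  · exact Or.inr ⟨v, u, hv, hu, h.symm⟩

theorem glueGraph_color_glueMap (hcc : ColorCompat G H) (v : H.V) :
    (glueGraph G H).color (glueMap G H v) = H.color v := by
  unfold glueMap
  split_ifs with h
  · exact (hcc h.choose).trans (congrArg H.color h.choose_spec)
  · rfl

/-- The vertices of color `c` in `G ⊕ H` are those of `G` together with the non-boundary ones of
`H`. The latter are cut out by an arbitrary predicate `q` equivalent to not being a boundary vertex,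
because `glueHyp` expresses this in terms of its own boundary objects. -/
def glueColorClassEquiv (G H : BGraph t C) (c : C) {q : {v : H.V // H.color v = c} → Prop}
    (hq : ∀ w, q w ↔ w.1 ∉ Set.range H.bnd) :
    {x : (glueGraph G H).V // (glueGraph G H).color x = c} ≃
      {v : G.V // G.color v = c} ⊕ {w : {v : H.V // H.color v = c} // q w} where
  toFun
    | ⟨Sum.inl v, h⟩ => Sum.inl ⟨v, h⟩
    | ⟨Sum.inr w, h⟩ => Sum.inr ⟨⟨w.1, h⟩, (hq _).2 w.2⟩
  invFun
    | Sum.inl v => ⟨Sum.inl v.1, v.2⟩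
    | Sum.inr w => ⟨Sum.inr ⟨w.1.1, (hq w.1).1 w.2⟩, w.1.2⟩
  left_inv := by rintro ⟨v | w, h⟩ <;> rfl
  right_inv := by rintro (v | w) <;> rfl

theorem glueColorClassEquiv_eq_inl_iff {c : C} {q : {v : H.V // H.color v = c} → Prop}
    (hq : ∀ w, q w ↔ w.1 ∉ Set.range H.bnd)
    {x : {x : (glueGraph G H).V // (glueGraph G H).color x = c}} {v : {v : G.V // G.color v = c}} :
    glueColorClassEquiv G H c hq x = Sum.inl v ↔ x.1 = Sum.inl v.1 := by
  rw [← Equiv.eq_symm_apply]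
  exact Subtype.ext_iff

end BGraph

section Hyperg

variable {t : ℕ} {G H : BGraph t Bool}

theorem hyperg_bnd_of_color_eq_false {i : Fin t} (h : G.color (G.bnd i) = false) :
    (hyperg G).bnd i = Sum.inl ⟨G.bnd i, h⟩ :=
  dif_pos h

theorem hyperg_bnd_of_color_eq_true {i : Fin t} (h : G.color (G.bnd i) = true) :
    (hyperg G).bnd i = Sum.inr ⟨G.bnd i, h⟩ :=
  dif_neg (ne_false_of_eq_true h)

theorem hyperg_bnd_eq_inl_iff {i : Fin t} {v : (hyperg G).V} :
    (hyperg G).bnd i = Sum.inl v ↔ G.bnd i = v.1 := by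
  refine ⟨fun h => ?_, fun h =>
    (hyperg_bnd_of_color_eq_false (h ▸ v.2)).trans (congrArg Sum.inl (Subtype.ext h))⟩
  cases hc : G.color (G.bnd i) with
  | false =>
    exact congrArg Subtype.val (Sum.inl.inj ((hyperg_bnd_of_color_eq_false hc).symm.trans h))
  | true => exact (Sum.inr_ne_inl ((hyperg_bnd_of_color_eq_true hc).symm.trans h)).elim

theorem hyperg_bnd_eq_inr_iff {i : Fin t} {e : (hyperg G).E} :
    (hyperg G).bnd i = Sum.inr e ↔ G.bnd i = e.1 := by
  refine ⟨fun h => ?_, fun h =>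
    (hyperg_bnd_of_color_eq_true (h ▸ e.2)).trans (congrArg Sum.inr (Subtype.ext h))⟩
  cases hc : G.color (G.bnd i) with
  | false => exact (Sum.inl_ne_inr ((hyperg_bnd_of_color_eq_false hc).symm.trans h)).elim
  | true =>
    exact congrArg Subtype.val (Sum.inr.inj ((hyperg_bnd_of_color_eq_true hc).symm.trans h))

theorem gluable_hyperg_iff : Gluable (hyperg G) (hyperg H) ↔ ColorCompat G H := by
  have isLeft_bnd (K : BGraph t Bool) (i : Fin t) :
      ((hyperg K).bnd i).isLeft = !K.color (K.bnd i) := by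
    cases h : K.color (K.bnd i) with
    | false => rw [hyperg_bnd_of_color_eq_false h]; rfl
    | true => rw [hyperg_bnd_of_color_eq_true h]; rfl
  simp only [Gluable, ColorCompat, isLeft_bnd, Bool.not_inj_iff]

theorem hyperg_glueGraph_mem_iff (hcc : ColorCompat G H) {v : (hyperg (glueGraph G H)).V}
    {e : (hyperg (glueGraph G H)).E} :
    (hyperg (glueGraph G H)).mem v e ↔
      (∃ (a : (hyperg G).V) (b : (hyperg G).E),
        v.1 = Sum.inl a.1 ∧ e.1 = Sum.inl b.1 ∧ (hyperg G).mem a b) ∨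
      ∃ (a : (hyperg H).V) (b : (hyperg H).E),
        (hyperg H).mem a b ∧ v.1 = glueMap G H a.1 ∧ e.1 = glueMap G H b.1 := by
  have hne : v.1 ≠ e.1 := fun h => by simpa [h, e.2] using v.2
  refine glueGraph_adj.trans ((and_iff_right hne).trans (or_congr ⟨?_, ?_⟩ ⟨?_, ?_⟩))
  · rintro ⟨a, b, ha, hb, hab⟩
    have ha_color : G.color a = false := (congrArg (glueGraph G H).color ha).symm.trans v.2
    have hb_color : G.color b = true := (congrArg (glueGraph G H).color hb).symm.trans e.2
    exact ⟨⟨a, ha_color⟩, ⟨b, hb_color⟩, ha, hb, hab⟩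
  · rintro ⟨a, b, ha, hb, hab⟩
    exact ⟨a.1, b.1, ha, hb, hab⟩
  · rintro ⟨a, b, ha, hb, hab⟩
    have ha_color : H.color a = false := by rw [← glueGraph_color_glueMap hcc, ← ha, v.2]
    have hb_color : H.color b = true := by rw [← glueGraph_color_glueMap hcc, ← hb, e.2]
    exact ⟨⟨a, ha_color⟩, ⟨b, hb_color⟩, hab, ha, hb⟩
  · rintro ⟨a, b, hab, ha, hb⟩
    exact ⟨a.1, b.1, ha, hb, hab⟩

/-- The bijection between the vertices of `H(G ⊕ H)` and those of `H(G) ⊕' H(H)`. -/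
def hypergGlueVEquiv (G H : BGraph t Bool) :
    (hyperg (glueGraph G H)).V ≃
      (hyperg G).V ⊕ {v : (hyperg H).V // ∀ i, (hyperg H).bnd i ≠ Sum.inl v} :=
  glueColorClassEquiv G H false fun w =>
    (forall_congr' fun _ => not_congr (hyperg_bnd_eq_inl_iff (v := w))).trans not_exists.symm

/-- The bijection between the hyperedges of `H(G ⊕ H)` and those of `H(G) ⊕' H(H)`. -/
def hypergGlueEEquiv (G H : BGraph t Bool) :
    (hyperg (glueGraph G H)).E ≃
      (hyperg G).E ⊕ {e : (hyperg H).E // ∀ i, (hyperg H).bnd i ≠ Sum.inr e} :=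
  glueColorClassEquiv G H true fun w =>
    (forall_congr' fun _ => not_congr (hyperg_bnd_eq_inr_iff (e := w))).trans not_exists.symm

theorem hypergGlueVEquiv_eq_inl_iff {x : (hyperg (glueGraph G H)).V} {v : (hyperg G).V} :
    hypergGlueVEquiv G H x = Sum.inl v ↔ x.1 = Sum.inl v.1 :=
  glueColorClassEquiv_eq_inl_iff _

theorem hypergGlueEEquiv_eq_inl_iff {x : (hyperg (glueGraph G H)).E} {e : (hyperg G).E} :
    hypergGlueEEquiv G H x = Sum.inl e ↔ x.1 = Sum.inl e.1 :=
  glueColorClassEquiv_eq_inl_iff _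

-- A repeated boundary vertex of `H` carries several labels, and `glueMap` and `glueMapV` each
-- choose one of them; they agree because they choose from equivalent predicates.
theorem hypergGlueVEquiv_symm_glueMapV (hgl : Gluable (hyperg G) (hyperg H)) (v : (hyperg H).V) :
    ((hypergGlueVEquiv G H).symm (glueMapV (hyperg G) (hyperg H) hgl v)).1 = glueMap G H v.1 := by
  have hiff (i : Fin t) : (hyperg H).bnd i = Sum.inl v ↔ H.bnd i = v.1 := hyperg_bnd_eq_inl_iff
  by_cases h : ∃ i, (hyperg H).bnd i = Sum.inl v
  · have h' : ∃ i, H.bnd i = v.1 := (exists_congr hiff).1 h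
    rw [glueMapV, glueMap, dif_pos h, dif_pos h', ← choose_congr hiff h h']
    exact congrArg Sum.inl (hyperg_bnd_eq_inl_iff.1 (Sum.inl_getLeft _ _).symm).symm
  · have h' : ¬∃ i, H.bnd i = v.1 := mt (exists_congr hiff).2 h
    rw [glueMapV, glueMap, dif_neg h, dif_neg h']
    rfl

theorem hypergGlueEEquiv_symm_glueMapE (hgl : Gluable (hyperg G) (hyperg H)) (e : (hyperg H).E) :
    ((hypergGlueEEquiv G H).symm (glueMapE (hyperg G) (hyperg H) hgl e)).1 = glueMap G H e.1 := by
  have hiff (i : Fin t) : (hyperg H).bnd i = Sum.inr e ↔ H.bnd i = e.1 := hyperg_bnd_eq_inr_iff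
  by_cases h : ∃ i, (hyperg H).bnd i = Sum.inr e
  · have h' : ∃ i, H.bnd i = e.1 := (exists_congr hiff).1 h
    rw [glueMapE, glueMap, dif_pos h, dif_pos h', ← choose_congr hiff h h']
    exact congrArg Sum.inl (hyperg_bnd_eq_inr_iff.1 (Sum.inr_getRight _ _).symm).symm
  · have h' : ¬∃ i, H.bnd i = e.1 := mt (exists_congr hiff).2 h
    rw [glueMapE, glueMap, dif_neg h, dif_neg h']
    rfl

theorem hypergGlueVEquiv_eq_glueMapV_iff (hgl : Gluable (hyperg G) (hyperg H))
    {x : (hyperg (glueGraph G H)).V} {v : (hyperg H).V} :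
    hypergGlueVEquiv G H x = glueMapV (hyperg G) (hyperg H) hgl v ↔ x.1 = glueMap G H v.1 := by
  rw [← Equiv.eq_symm_apply, ← hypergGlueVEquiv_symm_glueMapV hgl]
  exact Subtype.ext_iff

theorem hypergGlueEEquiv_eq_glueMapE_iff (hgl : Gluable (hyperg G) (hyperg H))
    {x : (hyperg (glueGraph G H)).E} {e : (hyperg H).E} :
    hypergGlueEEquiv G H x = glueMapE (hyperg G) (hyperg H) hgl e ↔ x.1 = glueMap G H e.1 := by
  rw [← Equiv.eq_symm_apply, ← hypergGlueEEquiv_symm_glueMapE hgl]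
  exact Subtype.ext_iff

theorem hyperg_glueGraph_mem_iff_glueHyp_mem (hgl : Gluable (hyperg G) (hyperg H))
    (v : (hyperg (glueGraph G H)).V) (e : (hyperg (glueGraph G H)).E) :
    (hyperg (glueGraph G H)).mem v e ↔
      (glueHyp (hyperg G) (hyperg H) hgl).mem (hypergGlueVEquiv G H v)
        (hypergGlueEEquiv G H e) := by
  simp only [hyperg_glueGraph_mem_iff (gluable_hyperg_iff.1 hgl), glueHyp,
    hypergGlueVEquiv_eq_inl_iff, hypergGlueEEquiv_eq_inl_iff,
    hypergGlueVEquiv_eq_glueMapV_iff, hypergGlueEEquiv_eq_glueMapE_iff]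

theorem glueHyp_hyperg_bnd (hgl : Gluable (hyperg G) (hyperg H)) (i : Fin t) :
    (glueHyp (hyperg G) (hyperg H) hgl).bnd i =
      ((hyperg (glueGraph G H)).bnd i).map (hypergGlueVEquiv G H) (hypergGlueEEquiv G H) := by
  change ((hyperg G).bnd i).map Sum.inl Sum.inl = _
  cases h : G.color (G.bnd i) with
  | false =>
    rw [hyperg_bnd_of_color_eq_false h, hyperg_bnd_of_color_eq_false (G := glueGraph G H) h]
    rfl
  | true =>
    rw [hyperg_bnd_of_color_eq_true h, hyperg_bnd_of_color_eq_true (G := glueGraph G H) h]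
    rfl

end Hyperg

theorem hyperg_glue_general {t : ℕ} (G H : BGraph t Bool) (hgl : Gluable (hyperg G) (hyperg H)) :
    Nonempty (BHypIso (hyperg (glueGraph G H)) (glueHyp (hyperg G) (hyperg H) hgl)) :=
  ⟨{ eV := hypergGlueVEquiv G H
     eE := hypergGlueEEquiv G H
     mem_iff := hyperg_glueGraph_mem_iff_glueHyp_mem hgl
     bnd_eq := glueHyp_hyperg_bnd hgl }⟩

/-- for gluable 2-colored `t`-boundaried bipartite incidence
graphs `G` and `H`, the hypergraph represented by the glued graph coincides
(via a label-preserving isomorphism) with the glued hypergraphs: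
`H(G ⊕ H) = H(G) ⊕' H(H)`. -/
theorem hyperg_glue {t : ℕ} (G H : BGraph t Bool)
    (hG : Bipartite2 G) (hH : Bipartite2 H)
    (hcc : ColorCompat G H)
    (hgl : Gluable (hyperg G) (hyperg H)) :
    Nonempty (BHypIso (hyperg (glueGraph G H)) (glueHyp (hyperg G) (hyperg H) hgl)) :=
  hyperg_glue_general G H hgl
end

section
/- If two t-boundaried hypergraphs G₁ and G₂ pass exactly the same set of cutwidth-k tests, then for every t-boundaried hypergraph H, the glued hypergraph G₁ ⊕ H has cutwidth at most k if and only if G₂ ⊕ H has cutwidth at most k. -/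
/-- The cut at position `i` of a linear layout `l` of a boundaried hypergraph. -/
def BHyp.cutAt {t : ℕ} (H : BHyp t) (l : H.V → ℝ) (i : ℝ) : Set H.E :=
  {e | ∃ v w, H.mem v e ∧ H.mem w e ∧ l v < i ∧ i < l w}

/-- A boundaried hypergraph has cutwidth at most `k`. -/
def BHyp.cutwidthAtMost {t : ℕ} (H : BHyp t) (k : ℕ) : Prop :=
  ∃ l : H.V → ℝ, Function.Injective l ∧ ∀ i : ℝ, (H.cutAt l i).encard ≤ k

/-- A size-`n` test `(π, S, k)` for cutwidth `k`: a map `π` from the boundary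
labels to the positions `{1,…,n}` (encoded as `Fin n`), a sequence
`S₀, …, S_n` of pairs `Sᵢ = (wᵢ, Eᵢ)` with `wᵢ ≤ k` and `Eᵢ ⊆ {1,…,t}`, where
each label occurs in a consecutive interval of the `Eᵢ`. -/
structure CwTest (t k : ℕ) where
  n : ℕ
  π : Fin t → Fin n
  w : ℕ → ℕ
  w_le : ∀ i ≤ n, w i ≤ k
  Elab : ℕ → Set (Fin t)
  Elab_convex : ∀ ℓ p q r, p ≤ q → q ≤ r → ℓ ∈ Elab p → ℓ ∈ Elab r → ℓ ∈ Elab q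
  Elab_bound : ∀ i, n < i → Elab i = ∅

/-- The positions of a hyperedge `e` with respect to a layout `f` and a test:
the images of its vertices, together with all integer positions `j` with
`ℓ ∈ Eⱼ` if `e` is the boundary hyperedge labeled `ℓ`. -/
def posSet {t k : ℕ} (G : BHyp t) (T : CwTest t k) (f : G.V → ℝ) (e : G.E) : Set ℝ :=
  {x | ∃ v, G.mem v e ∧ f v = x} ∪
  {x | ∃ (ℓ : Fin t) (j : ℕ), G.bnd ℓ = Sum.inr e ∧ ℓ ∈ T.Elab j ∧ x = (j : ℝ)}

/-- The joint cut at `i`: the hyperedges having positions on both sides of `i`. -/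
def jointCut {t k : ℕ} (G : BHyp t) (T : CwTest t k) (f : G.V → ℝ) (i : ℝ) : Set G.E :=
  {e | ∃ x y, x ∈ posSet G T f e ∧ y ∈ posSet G T f e ∧ x < i ∧ i < y}

/-- `G` passes the test `T`: some `T`-compatible layout (boundary vertices at
their prescribed integer positions, other vertices in the open unit intervals)
has joint cutwidth at most `k`. -/
def Passes {t k : ℕ} (G : BHyp t) (T : CwTest t k) : Prop :=
  ∃ f : G.V → ℝ, Function.Injective f ∧
    (∀ ℓ v, G.bnd ℓ = Sum.inl v → f v = (T.π ℓ : ℝ) + 1) ∧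
    (∀ v, (∀ ℓ, G.bnd ℓ ≠ Sum.inl v) →
      ∃ j : ℕ, j ≤ T.n ∧ (j : ℝ) < f v ∧ f v < (j : ℝ) + 1) ∧
    ∀ i : ℝ, 0 < i → i < (T.n : ℝ) + 1 → (¬ ∃ m : ℤ, i = (m : ℝ)) →
      (jointCut G T f i).encard + (T.w ⌊i⌋.toNat : ℕ∞) ≤ k

/-!
Fix a layout of `G₁ ⊕ H` of cutwidth at most `k` and keep only the positions it gives to the
vertices of `H` and to the labels. For a lower set `c` of `ℝ`, let the signature of `c` be the
number of private hyperedges of `H` cut by `c`, together with the labels having a position inside,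
and outside, of `c`. The signature takes finitely many values and is lower semicontinuous in `c`, so
`⊥` can be joined to `⊤` by finitely many lower sets, consecutive ones either differing by a single
point or bounding an interval on which the signature is largest at one end and smallest at the
other. Such a sweep is all that a test needs to record of `H`.

`G₁` passes the test: the vertices of `G₁` between two consecutive lower sets, which are neither
vertices of `H` nor boundary vertices, are pushed to the cheaper end of their interval. Conversely,
a layout of `G₂` that passes the test is merged with the layout of `H`: the vertices of `H` between
two consecutive lower sets are inserted together at the dearer end, where the test charges for them.
-/

/-! ### Reaching the top in finitely many steps -/

section StepDef

variable {α S : Type*} [PartialOrder α] [PartialOrder S]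

/-- Between `x` and `y` the value of `σ` is least at `x` and greatest at `y`; no monotonicity in
between is asked for. -/
def IsAscent (σ : α → S) (x y : α) : Prop :=
  x ≤ y ∧ ∀ c ∈ Set.Icc x y, σ c ∈ Set.Icc (σ x) (σ y)

/-- Between `x` and `y` the value of `σ` is greatest at `x` and least at `y`. -/
def IsDescent (σ : α → S) (x y : α) : Prop :=
  x ≤ y ∧ ∀ c ∈ Set.Icc x y, σ c ∈ Set.Icc (σ y) (σ x)

/-- The moves of a sweep: passing to a cover, which may change `σ` arbitrarily, or crossing an
interval on which the ends bound `σ`. -/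
def IsStep (σ : α → S) (x y : α) : Prop :=
  x ⋖ y ∨ IsAscent σ x y ∨ IsDescent σ x y

theorem IsAscent.refl (σ : α → S) (x : α) : IsAscent σ x x := by
  refine ⟨le_rfl, fun c hc => ?_⟩
  obtain rfl : c = x := le_antisymm hc.2 hc.1
  exact ⟨le_rfl, le_rfl⟩

theorem IsStep.le {σ : α → S} {x y : α} (h : IsStep σ x y) : x ≤ y := by
  rcases h with h | h | h
  exacts [h.le, h.1, h.1]

end StepDef

section Reach

open Set Filter Topology Relation

variable {α S : Type*} [PartialOrder S] {σ : α → S}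

theorem exists_seq_of_reflTransGen {r : α → α → Prop} (hr : ∀ a, r a a) {a b : α}
    (h : ReflTransGen r a b) :
    ∃ (n : ℕ) (x : ℕ → α), x 0 = a ∧ (∀ j, n ≤ j → x j = b) ∧ ∀ i, r (x i) (x (i + 1)) := by
  induction h using ReflTransGen.head_induction_on with
  | refl => exact ⟨0, fun _ => b, rfl, fun _ _ => rfl, fun _ => hr b⟩
  | @head a c hac _ ih =>
    obtain ⟨n, x, rfl, hn, hx⟩ := ih
    refine ⟨n + 1, fun i => i.casesOn a x, rfl, ?_, ?_⟩
    · rintro (_ | j) hj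
      exacts [absurd hj (by lia), hn j (by lia)]
    · rintro (_ | i)
      exacts [hac, hx i]

theorem exists_forall_le_of_isChain_image {s : Set α} (hfin : (σ '' s).Finite)
    (hchain : IsChain (· ≤ ·) (σ '' s)) (hs : s.Nonempty) : ∃ a ∈ s, ∀ c ∈ s, σ c ≤ σ a := by
  obtain ⟨a, ha, hmax⟩ := hfin.exists_maximalFor' σ s hs
  refine ⟨a, ha, fun c hc => ?_⟩
  exact (hchain.total (mem_image_of_mem σ hc) (mem_image_of_mem σ ha)).elim id (hmax hc)

theorem exists_forall_ge_of_isChain_image {s : Set α} (hfin : (σ '' s).Finite)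
    (hchain : IsChain (· ≤ ·) (σ '' s)) (hs : s.Nonempty) : ∃ a ∈ s, ∀ c ∈ s, σ a ≤ σ c := by
  obtain ⟨a, ha, hmin⟩ := hfin.exists_minimalFor' σ s hs
  refine ⟨a, ha, fun c hc => ?_⟩
  exact (hchain.total (mem_image_of_mem σ ha) (mem_image_of_mem σ hc)).elim id (hmin hc)

theorem isClosed_setOf_le_of_isLocalMin [TopologicalSpace α] (hmin : ∀ c, IsLocalMin σ c) (m : S) :
    IsClosed {c | σ c ≤ m} := by
  refine isOpen_compl_iff.mp (isOpen_iff_mem_nhds.mpr fun c hc => ?_)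
  filter_upwards [hmin c] with d hd hdm using hc (hd.trans hdm)

section PartialOrder

variable [PartialOrder α] {a b p q : α}

theorem exists_isDescent_of_lt (hfin : (σ '' Icc p a).Finite)
    (hchain : IsChain (· ≤ ·) (σ '' Icc p a)) (ha : ∀ c ∈ Icc p a, σ a ≤ σ c) (hpa : p < a) :
    ∃ z ∈ Ico p a, IsDescent σ z a := by
  have hsub : σ '' Ico p a ⊆ σ '' Icc p a := image_mono Ico_subset_Icc_self
  obtain ⟨z, hz, hzmax⟩ :=
    exists_forall_le_of_isChain_image (hfin.subset hsub) (hchain.mono hsub) ⟨p, le_rfl, hpa⟩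
  refine ⟨z, hz, hz.2.le, fun c hc => ⟨ha c ⟨hz.1.trans hc.1, hc.2⟩, ?_⟩⟩
  rcases hc.2.eq_or_lt with rfl | hca
  · exact ha z ⟨hz.1, hz.2.le⟩
  · exact hzmax c ⟨hz.1.trans hc.1, hca⟩

theorem exists_isAscent_of_lt (hfin : (σ '' Icc b q).Finite)
    (hchain : IsChain (· ≤ ·) (σ '' Icc b q)) (hb : ∀ c ∈ Icc b q, σ b ≤ σ c) (hbq : b < q) :
    ∃ z ∈ Ioc b q, IsAscent σ b z := by
  have hsub : σ '' Ioc b q ⊆ σ '' Icc b q := image_mono Ioc_subset_Icc_self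
  obtain ⟨z, hz, hzmax⟩ :=
    exists_forall_le_of_isChain_image (hfin.subset hsub) (hchain.mono hsub) ⟨q, hbq, le_rfl⟩
  refine ⟨z, hz, hz.1.le, fun c hc => ⟨hb c ⟨hc.1, hc.2.trans hz.2⟩, ?_⟩⟩
  rcases hc.1.eq_or_lt with rfl | hbc
  · exact hb z ⟨hz.1.le, hz.2⟩
  · exact hzmax c ⟨hbc, hc.2.trans hz.2⟩

theorem reflTransGen_isStep_of_forall_ge (hfin : (σ '' Icc a b).Finite)
    (hchain : IsChain (· ≤ ·) (σ '' Icc a b)) (ha : ∀ c ∈ Icc a b, σ a ≤ σ c)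
    (hb : ∀ c ∈ Icc a b, σ b ≤ σ c) (hab : a ≤ b) : ReflTransGen (IsStep σ) a b := by
  obtain ⟨z, hz, hzmax⟩ := exists_forall_le_of_isChain_image hfin hchain ⟨a, le_rfl, hab⟩
  refine .head (.inr (.inl ⟨hz.1, fun c hc => ?_⟩)) (.single (.inr (.inr ⟨hz.2, fun c hc => ?_⟩)))
  · have hc' : c ∈ Icc a b := ⟨hc.1, hc.2.trans hz.2⟩
    exact ⟨ha c hc', hzmax c hc'⟩
  · have hc' : c ∈ Icc a b := ⟨hz.1.trans hc.1, hc.2⟩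
    exact ⟨hb c hc', hzmax c hc'⟩

end PartialOrder

section CompactIcc

variable [LinearOrder α] [TopologicalSpace α] [OrderClosedTopology α] [CompactIccSpace α] {p q : α}

theorem exists_isMinOn_Icc_and_forall_mem_Icc (hmin : ∀ c, IsLocalMin σ c) (hpq : p ≤ q)
    (hfin : (σ '' Icc p q).Finite) (hchain : IsChain (· ≤ ·) (σ '' Icc p q)) :
    ∃ a ∈ Icc p q, ∃ b ∈ Icc p q, (∀ c ∈ Icc p q, σ a ≤ σ c) ∧ σ b = σ a ∧
      ∀ c ∈ Icc p q, σ c = σ a → c ∈ Icc a b := by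
  obtain ⟨x, hx, hxmin⟩ :=
    exists_forall_ge_of_isChain_image hfin hchain (nonempty_Icc.mpr hpq)
  have hcompact : IsCompact (Icc p q ∩ {c | σ c ≤ σ x}) :=
    isCompact_Icc.inter_right (isClosed_setOf_le_of_isLocalMin hmin _)
  obtain ⟨a, ⟨ha, hax⟩, hleast⟩ := hcompact.exists_isLeast ⟨x, hx, le_rfl⟩
  obtain ⟨b, ⟨hb, hbx⟩, hgreatest⟩ := hcompact.exists_isGreatest ⟨x, hx, le_rfl⟩
  have hax' : σ a = σ x := le_antisymm hax (hxmin a ha)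
  have hbx' : σ b = σ x := le_antisymm hbx (hxmin b hb)
  refine ⟨a, ha, b, hb, fun c hc => hax'.trans_le (hxmin c hc), hbx'.trans hax'.symm,
    fun c hc hca => ?_⟩
  have hcx : σ c ≤ σ x := (hca.trans hax').le
  exact ⟨hleast ⟨hc, hcx⟩, hgreatest ⟨hc, hcx⟩⟩

theorem reflTransGen_isStep_of_isChain (hmin : ∀ c, IsLocalMin σ c) (hpq : p ≤ q)
    (hfin : (σ '' Icc p q).Finite) (hchain : IsChain (· ≤ ·) (σ '' Icc p q)) :
    ReflTransGen (IsStep σ) p q := by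
  -- The induction is on the number of values of `σ`: both sides of the hull of the set where `σ`
  -- is least miss the least value.
  induction hn : (σ '' Icc p q).ncard using Nat.strong_induction_on generalizing p q with
  | _ n ih =>
  subst hn
  have hfin' {u v : α} (hsub : Icc u v ⊆ Icc p q) : (σ '' Icc u v).Finite :=
    hfin.subset (image_mono hsub)
  have hchain' {u v : α} (hsub : Icc u v ⊆ Icc p q) : IsChain (· ≤ ·) (σ '' Icc u v) :=
    hchain.mono (image_mono hsub)
  obtain ⟨a, ha, b, hb, hamin, hba, hhull⟩ :=
    exists_isMinOn_Icc_and_forall_mem_Icc hmin hpq hfin hchain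
  have shorter {u v : α} (hsub : Icc u v ⊆ Icc p q) (huv : u ≤ v)
      (hne : ∀ c ∈ Icc u v, c ∉ Icc a b) : ReflTransGen (IsStep σ) u v := by
    refine ih _ (ncard_lt_ncard ⟨image_mono hsub, fun h => ?_⟩ hfin) huv (hfin' hsub)
      (hchain' hsub) rfl
    obtain ⟨c, hc, hca⟩ := h (mem_image_of_mem σ ha)
    exact hne c hc (hhull c (hsub hc) hca)
  have hpa : Icc p a ⊆ Icc p q := Icc_subset_Icc_right ha.2
  have hab : Icc a b ⊆ Icc p q := Icc_subset_Icc ha.1 hb.2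
  have hbq : Icc b q ⊆ Icc p q := Icc_subset_Icc_left hb.1
  have reach_a : ReflTransGen (IsStep σ) p a := by
    rcases ha.1.eq_or_lt with rfl | hlt
    · rfl
    obtain ⟨z, hz, hza⟩ := exists_isDescent_of_lt (hfin' hpa) (hchain' hpa)
      (fun c hc => hamin c (hpa hc)) hlt
    exact (shorter (Icc_subset_Icc_right (hz.2.le.trans ha.2)) hz.1 fun c hc hcab =>
      hcab.1.not_gt (hc.2.trans_lt hz.2)).tail (.inr (.inr hza))
  have reach_b : ReflTransGen (IsStep σ) a b :=
    reflTransGen_isStep_of_forall_ge (hfin' hab) (hchain' hab) (fun c hc => hamin c (hab hc))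
      (fun c hc => hba.trans_le (hamin c (hab hc))) (hhull b hb hba).1
  have reach_q : ReflTransGen (IsStep σ) b q := by
    rcases hb.2.eq_or_lt with rfl | hlt
    · rfl
    obtain ⟨z, hz, hbz⟩ := exists_isAscent_of_lt (hfin' hbq) (hchain' hbq)
      (fun c hc => hba.trans_le (hamin c (hbq hc))) hlt
    exact .head (.inr (.inl hbz)) (shorter (Icc_subset_Icc_left (hb.1.trans hz.1.le)) hz.2
      fun c hc hcab => hcab.2.not_gt (hz.1.trans_le hc.1))
  exact (reach_a.trans reach_b).trans reach_q

end CompactIcc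

section Fibres

variable {β : Type*} [LinearOrder α] [TopologicalSpace α] [OrderTopology α] [PartialOrder β]
  {τ : α → β}

theorem exists_eventually_eq_nhdsGT_of_monotone (hτ : Monotone τ) (hfin : (range τ).Finite)
    (c : α) : ∃ v, ∀ᶠ y in 𝓝[>] c, τ y = v := by
  rcases (Ioi c).eq_empty_or_nonempty with h | h
  · exact ⟨τ c, by simp [h]⟩
  obtain ⟨y, hcy, hy⟩ :=
    (hfin.subset (image_subset_range τ (Ioi c))).exists_minimalFor' τ (Ioi c) h
  refine ⟨τ y, ?_⟩
  filter_upwards [Ioc_mem_nhdsGT (mem_Ioi.mp hcy)] with z hz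
  exact (hτ hz.2).antisymm (hy hz.1 (hτ hz.2))

theorem exists_eventually_eq_nhdsLT_of_monotone (hτ : Monotone τ) (hfin : (range τ).Finite)
    (c : α) : ∃ v, ∀ᶠ y in 𝓝[<] c, τ y = v :=
  exists_eventually_eq_nhdsGT_of_monotone (α := αᵒᵈ) (β := βᵒᵈ) hτ.dual hfin (OrderDual.toDual c)

theorem eventually_isChain_image_uIcc (hτ : Monotone τ) (hfin : (range τ).Finite)
    (hfibre : ∀ a b, τ a = τ b → σ a ≤ σ b ∨ σ b ≤ σ a) {c : α} (hmin : IsLocalMin σ c) :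
    ∀ᶠ y in 𝓝 c, IsChain (· ≤ ·) (σ '' uIcc c y) := by
  obtain ⟨u, hu⟩ := exists_eventually_eq_nhdsGT_of_monotone hτ hfin c
  obtain ⟨v, hv⟩ := exists_eventually_eq_nhdsLT_of_monotone hτ hfin c
  have hnear : ∀ᶠ z in 𝓝 c, σ c ≤ σ z ∧ (c < z → τ z = u) ∧ (z < c → τ z = v) :=
    (hmin.and (eventually_nhdsWithin_iff.mp hu)).and (eventually_nhdsWithin_iff.mp hv) |>.mono
      fun z h => ⟨h.1.1, h.1.2, h.2⟩
  have hsmall : ∀ᶠ s in (𝓝 c).smallSets, ∀ z ∈ s, _ := eventually_smallSets_forall.mpr hnear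
  filter_upwards [(tendsto_const_nhds.uIcc tendsto_id).eventually hsmall] with y hy
  rintro _ ⟨a, ha, rfl⟩ _ ⟨b, hb, rfl⟩ -
  obtain ⟨hca, hua, hva⟩ := hy a ha
  obtain ⟨hcb, hub, hvb⟩ := hy b hb
  rcases eq_or_ne a c with rfl | hac
  · exact .inl hcb
  rcases eq_or_ne b c with rfl | hbc
  · exact .inr hca
  refine hfibre a b ?_
  rcases le_total c y with hcy | hyc
  · rw [uIcc_of_le hcy] at ha hb
    rw [hua (ha.1.lt_of_ne' hac), hub (hb.1.lt_of_ne' hbc)]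
  · rw [uIcc_of_ge hyc] at ha hb
    rw [hva (ha.2.lt_of_ne hac), hvb (hb.2.lt_of_ne hbc)]

end Fibres

variable [CompleteLinearOrder α] [TopologicalSpace α] [OrderTopology α]

theorem reflTransGen_isStep_bot_top (hfin : (range σ).Finite) (hmin : ∀ c, IsLocalMin σ c)
    (hchain : ∀ c, ∀ᶠ y in 𝓝 c, IsChain (· ≤ ·) (σ '' uIcc c y)) :
    ReflTransGen (IsStep σ) ⊥ ⊤ := by
  have extend {x y : α} (hxy : x ≤ y) (hx : ReflTransGen (IsStep σ) ⊥ x)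
      (h : IsChain (· ≤ ·) (σ '' Icc x y)) : ReflTransGen (IsStep σ) ⊥ y :=
    hx.trans (reflTransGen_isStep_of_isChain hmin hxy (hfin.subset (image_subset_range _ _)) h)
  set T : Set α := {x | ReflTransGen (IsStep σ) ⊥ x}
  have hs : sSup T ∈ T := by
    have hclosure : sSup T ∈ closure T := sSup_mem_closure ⟨⊥, ReflTransGen.refl⟩
    obtain ⟨y, hyT, hy⟩ :=
      ((mem_closure_iff_frequently.mp hclosure).and_eventually (hchain _)).exists
    rw [uIcc_of_ge (le_sSup hyT)] at hy
    exact extend (le_sSup hyT) hyT hy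
  rcases eq_or_ne (sSup T) ⊤ with htop | htop
  · rwa [htop] at hs
  obtain ⟨y, hsy, hyT⟩ : ∃ y, sSup T < y ∧ y ∈ T := by
    rcases eq_or_neBot (𝓝[>] sSup T) with hbot | _
    · obtain h | ⟨y, hy⟩ := nhdsGT_eq_bot_iff.mp hbot
      · exact absurd h.isMax.eq_top htop
      · exact ⟨y, hy.lt, hs.tail (.inl hy)⟩
    · have hright : ∀ᶠ y in 𝓝[>] sSup T, sSup T < y := self_mem_nhdsWithin
      obtain ⟨y, hsy, hy⟩ :=
        (hright.and (eventually_nhdsWithin_of_eventually_nhds (hchain (sSup T)))).exists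
      rw [uIcc_of_le hsy.le] at hy
      exact ⟨y, hsy, extend hsy.le hs hy⟩
  exact absurd (le_sSup hyT) hsy.not_ge

end Reach

/-! ### Cuts at lower sets -/

section Crossing

open Set Filter Topology Relation

variable {K ι L : Type*} [LinearOrder L] {pos : K → Set L} {P : ι → Set L} {c d x y : LowerSet L}
  {e : K} {r s : L}

/-- The edges having a position in the lower set `c`, where `pos e` is the set of positions of `e`.
Cuts are taken at lower sets, rather than at points, because the lower sets of `ℝ` form a complete
linear order in which every point `r` gives the jump from `Iio r` to `Iic r`. -/
def leftOf (pos : K → Set L) (c : LowerSet L) : Set K :=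
  {e | ∃ p ∈ pos e, p ∈ c}

/-- The edges having a position outside of the lower set `c`. -/
def rightOf (pos : K → Set L) (c : LowerSet L) : Set K :=
  {e | ∃ p ∈ pos e, p ∉ c}

/-- The cut at the lower set `c`: the edges with positions on both sides. -/
def crossing (pos : K → Set L) (c : LowerSet L) : Set K :=
  leftOf pos c ∩ rightOf pos c

/-- What a test records about a cut: the size of the cut of the edges placed by `pos`, and the
labels, placed by `P`, that are seen on its left and on its right. `ncard` makes an infinite cut
count as empty, so this is meant for families with finite cuts. -/
noncomputable def signature (pos : K → Set L) (P : ι → Set L) (c : LowerSet L) :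
    ℕ × Set ι × Set ι :=
  ((crossing pos c).ncard, leftOf P c, rightOf P c)

theorem leftOf_mono (pos : K → Set L) : Monotone (leftOf pos) :=
  fun _ _ h _ ⟨p, hp, hpc⟩ => ⟨p, hp, h hpc⟩

theorem rightOf_anti (pos : K → Set L) : Antitone (rightOf pos) :=
  fun _ _ h _ ⟨p, hp, hpc⟩ => ⟨p, hp, fun hpd => hpc (h hpd)⟩

theorem leftOf_congr (h : ∀ e, ∀ p ∈ pos e, (p ∈ c ↔ p ∈ d)) : leftOf pos c = leftOf pos d :=
  ext fun e => exists_congr fun p => and_congr_right (h e p)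

theorem rightOf_congr (h : ∀ e, ∀ p ∈ pos e, (p ∈ c ↔ p ∈ d)) : rightOf pos c = rightOf pos d :=
  ext fun e => exists_congr fun p => and_congr_right fun hp => not_congr (h e p hp)

theorem signature_congr (hpos : ∀ e, ∀ p ∈ pos e, (p ∈ c ↔ p ∈ d))
    (hP : ∀ ℓ, ∀ p ∈ P ℓ, (p ∈ c ↔ p ∈ d)) : signature pos P c = signature pos P d := by
  rw [signature, signature, crossing, crossing, leftOf_congr hpos, leftOf_congr hP,
    rightOf_congr hpos, rightOf_congr hP]

theorem encard_crossing_sum {K' : Type*} (pos : K ⊕ K' → Set L) (c : LowerSet L) :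
    (crossing pos c).encard =
      (crossing (pos ∘ .inl) c).encard + (crossing (pos ∘ .inr) c).encard := by
  have hdisj : Disjoint (Sum.inl '' crossing (pos ∘ .inl) c) (Sum.inr '' crossing (pos ∘ .inr) c) :=
    isCompl_range_inl_range_inr.disjoint.mono (image_subset_range _ _) (image_subset_range _ _)
  rw [← Sum.inl_injective.encard_image (crossing (pos ∘ .inl) c),
    ← Sum.inr_injective.encard_image (crossing (pos ∘ .inr) c), ← encard_union_eq hdisj]
  exact congrArg encard (image_preimage_inl_union_image_preimage_inr (crossing pos c)).symm

theorem mem_iff_mem_of_signature_le {ℓ : ι} (hℓ : P ℓ = {r})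
    (h : signature pos P c ≤ signature pos P d) : r ∈ c ↔ r ∈ d := by
  obtain ⟨-, hleft : leftOf P c ⊆ leftOf P d, hright : rightOf P c ⊆ rightOf P d⟩ := h
  have hl := @hleft ℓ
  have hr := @hright ℓ
  simp only [leftOf, rightOf, mem_ofPred_eq, hℓ, mem_singleton_iff, exists_eq_left] at hl hr
  exact ⟨hl, not_imp_not.mp hr⟩

theorem eq_of_mem_of_notMem_of_covBy (h : x ⋖ y) (hr : r ∈ y) (hr' : r ∉ x) (hs : s ∈ y)
    (hs' : s ∉ x) : r = s := by
  have key {u v : L} (hu' : u ∉ x) (hu : u ∈ y) (hv : v ∈ y) (hv' : v ∉ x) : ¬ u < v := by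
    intro huv
    refine h.2 (c := x ⊔ LowerSet.Iic u) (left_lt_sup.mpr fun hle => hu' (hle le_rfl))
      ((sup_le h.le (LowerSet.Iic_le.mpr hu)).lt_of_ne fun heq => ?_)
    exact (heq.symm ▸ hv : v ∈ x ⊔ LowerSet.Iic u).elim hv' huv.not_ge
  exact le_antisymm (not_lt.mp (key hs' hs hr hr')) (not_lt.mp (key hr' hr hs hs'))

theorem isAscent_signature_of_covBy (h : x ⋖ y) (hr : r ∈ y) (hr' : r ∉ x)
    (hpos : ∀ e, r ∉ pos e) (hP : ∀ ℓ, r ∉ P ℓ) : IsAscent (signature pos P) x y := by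
  have key {p : L} (hp : p ≠ r) : p ∈ x ↔ p ∈ y :=
    ⟨fun hx => h.le hx, fun hy => by_contra fun hx =>
      hp (eq_of_mem_of_notMem_of_covBy h hy hx hr hr')⟩
  have heq : signature pos P x = signature pos P y :=
    signature_congr (fun e p hp => key (ne_of_mem_of_not_mem hp (hpos e)))
      fun ℓ p hp => key (ne_of_mem_of_not_mem hp (hP ℓ))
  refine ⟨h.le, fun c hc => ?_⟩
  rcases h.eq_or_eq hc.1 hc.2 with rfl | rfl
  exacts [⟨le_rfl, heq.le⟩, ⟨heq.le, le_rfl⟩]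

section Topology

variable [TopologicalSpace (LowerSet L)] [OrderTopology (LowerSet L)]

theorem eventually_mem_leftOf (he : e ∈ leftOf pos c) : ∀ᶠ d in 𝓝 c, e ∈ leftOf pos d := by
  obtain ⟨p, hp, hpc⟩ := he
  have hlt : LowerSet.Iio p < c := lt_of_not_ge fun h => lt_irrefl p (h hpc)
  filter_upwards [Ioi_mem_nhds hlt] with d hd
  obtain ⟨q, hqd, hqp⟩ := not_subset.mp hd.not_ge
  exact ⟨p, hp, d.lower (not_lt.mp hqp) hqd⟩

theorem eventually_mem_rightOf (he : e ∈ rightOf pos c) : ∀ᶠ d in 𝓝 c, e ∈ rightOf pos d := by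
  obtain ⟨p, hp, hpc⟩ := he
  have hlt : c < LowerSet.Iic p := lt_of_not_ge fun h => hpc (LowerSet.Iic_le.mp h)
  filter_upwards [Iio_mem_nhds hlt] with d hd
  exact ⟨p, hp, fun hpd => hd.not_ge (LowerSet.Iic_le.mpr hpd)⟩

theorem isLocalMin_signature [Finite ι] (hfin : ∀ c, (crossing pos c).Finite) (c : LowerSet L) :
    IsLocalMin (signature pos P) c := by
  have hcross : ∀ᶠ d in 𝓝 c, crossing pos c ⊆ crossing pos d :=
    (eventually_all_finite (hfin c)).mpr fun e he =>
      (eventually_mem_leftOf he.1).and (eventually_mem_rightOf he.2)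
  have hleft : ∀ᶠ d in 𝓝 c, leftOf P c ⊆ leftOf P d :=
    (eventually_all_finite (toFinite _)).mpr fun _ => eventually_mem_leftOf
  have hright : ∀ᶠ d in 𝓝 c, rightOf P c ⊆ rightOf P d :=
    (eventually_all_finite (toFinite _)).mpr fun _ => eventually_mem_rightOf
  filter_upwards [hcross, hleft, hright] with d hd hl hr
  exact ⟨ncard_le_ncard hd (hfin d), hl, hr⟩

end Topology

theorem reflTransGen_isStep_signature [Finite ι] {k : ℕ} (hk : ∀ c, (crossing pos c).encard ≤ k)
    (P : ι → Set L) : ReflTransGen (IsStep (signature pos P)) ⊥ ⊤ := by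
  let _ : TopologicalSpace (LowerSet L) := Preorder.topology _
  have _ : OrderTopology (LowerSet L) := ⟨rfl⟩
  have hfin (c : LowerSet L) : (crossing pos c).Finite := finite_of_encard_le_coe (hk c)
  have hmin := isLocalMin_signature (P := P) hfin
  refine reflTransGen_isStep_bot_top ?_ hmin fun c => ?_
  · refine ((finite_Iic k).prod finite_univ).subset (range_subset_iff.mpr fun c => ⟨?_, mem_univ _⟩)
    exact_mod_cast (hfin c).cast_ncard_eq.trans_le (hk c)
  · have hτ : Monotone fun c => (leftOf P c, OrderDual.toDual (rightOf P c)) :=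
      fun _ _ h => Prod.mk_le_mk.mpr ⟨leftOf_mono P h, rightOf_anti P h⟩
    refine eventually_isChain_image_uIcc hτ (toFinite _) (fun a b hab => ?_) (hmin c)
    have hleft : leftOf P a = leftOf P b := congrArg Prod.fst hab
    have hright : rightOf P a = rightOf P b := congrArg Prod.snd hab
    exact (le_total (crossing pos a).ncard (crossing pos b).ncard).imp
      (fun h => ⟨h, hleft.le, hright.le⟩) (fun h => ⟨h, hleft.ge, hright.ge⟩)

end Crossing

section OpenCut

open Set

variable {K L : Type*} [LinearOrder L]

theorem encard_add_le_of_forall_finite_subset {s : Set K} {w k : ℕ}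
    (h : ∀ F ⊆ s, F.Finite → F.encard + w ≤ k) : s.encard + w ≤ k := by
  by_contra! hlt
  have hwk : w ≤ k := by simpa using h ∅ (empty_subset s) finite_empty
  have hle : ((k - w + 1 : ℕ) : ℕ∞) ≤ s.encard := by
    by_contra! hs
    have hs' : s.encard ≤ (k - w : ℕ) := ENat.lt_natCast_add_one_iff.mp hs
    refine hlt.not_ge ((add_le_add_left hs' _).trans ?_)
    exact_mod_cast (Nat.sub_add_cancel hwk).le
  obtain ⟨F, hFs, hF⟩ := exists_subset_encard_eq hle
  have := h F hFs (finite_of_encard_eq_coe hF)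
  rw [hF] at this
  norm_cast at this
  lia

/-- The cut at a point `y`, where a position equal to `y` lies on neither side. -/
def openCut (pos : K → Set L) (y : L) : Set K :=
  {e | ∃ p q, p ∈ pos e ∧ q ∈ pos e ∧ p < y ∧ y < q}

theorem openCut_subset_crossing (pos : K → Set L) (y : L) :
    openCut pos y ⊆ crossing pos (LowerSet.Iio y) :=
  fun _ ⟨p, q, hp, hq, hpy, hyq⟩ => ⟨⟨p, hp, hpy⟩, q, hq, hyq.le.not_gt⟩

theorem encard_crossing_add_le [DenselyOrdered L] {pos : K → Set L} {c : LowerSet L} {a b : L}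
    {w k : ℕ} (ha : a ∈ c) (hb : b ∉ c)
    (h : ∀ y ∈ Ioo a b, (openCut pos y).encard + w ≤ k) : (crossing pos c).encard + w ≤ k := by
  refine encard_add_le_of_forall_finite_subset fun F hF hfin => ?_
  have _ : Nonempty L := ⟨a⟩
  choose! p hp using fun e (he : e ∈ F) => (hF he).1
  choose! q hq using fun e (he : e ∈ F) => (hF he).2
  obtain ⟨u, hu, hmax⟩ := exists_max_image _ id (hfin.image p |>.insert a) (insert_nonempty _ _)
  obtain ⟨v, hv, hmin⟩ := exists_min_image _ id (hfin.image q |>.insert b) (insert_nonempty _ _)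
  simp only [mem_insert_iff, forall_eq_or_imp, forall_mem_image, id_eq] at hmax hmin
  have huc : u ∈ c := by
    rcases hu with rfl | ⟨e, he, rfl⟩
    exacts [ha, (hp e he).2]
  have hvc : v ∉ c := by
    rcases hv with rfl | ⟨e, he, rfl⟩
    exacts [hb, (hq e he).2]
  obtain ⟨y, huy, hyv⟩ := exists_between (not_le.mp fun hvu => hvc (c.lower hvu huc))
  have hsub : F ⊆ openCut pos y := fun e he =>
    ⟨p e, q e, (hp e he).1, (hq e he).1, (hmax.2 he).trans_lt huy, hyv.trans_le (hmin.2 he)⟩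
  exact (add_le_add_left (encard_le_encard hsub) _).trans
    (h y ⟨hmax.1.trans_lt huy, hyv.trans_le hmin.1⟩)

theorem encard_crossing_le [DenselyOrdered L] {pos : K → Set L} {k : ℕ}
    (h : ∀ y, (openCut pos y).encard ≤ k) (c : LowerSet L) : (crossing pos c).encard ≤ k := by
  rcases (crossing pos c).eq_empty_or_nonempty with hc | ⟨e, ⟨a, -, ha⟩, b, -, hb⟩
  · simp [hc]
  · simpa using encard_crossing_add_le (w := 0) ha hb fun y _ => by simpa using h y

end OpenCut

/-! ### Sweeps -/

/-- The lower set of the points which the monotone map `f` sends below `y`: the cut at `y` after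
moving all positions by `f`, seen before the move. -/
def below {f : ℝ → ℝ} (hf : Monotone f) (y : ℝ) : LowerSet ℝ :=
  ⟨{r | f r < y}, fun _ _ h hr => (hf h).trans_lt hr⟩

/-- A finite chain of steps from `⊥` to `⊤` in the lower sets of `L`. The chain is continued by `⊤`
from index `n` on, which avoids indices in `Fin (n + 1)`. -/
structure Sweep {L S : Type*} [LinearOrder L] [PartialOrder S] (σ : LowerSet L → S) where
  n : ℕ
  cut : ℕ → LowerSet L
  cut_zero : cut 0 = ⊥
  cut_of_le : ∀ j, n ≤ j → cut j = ⊤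
  isStep : ∀ j, IsStep σ (cut j) (cut (j + 1))

namespace Sweep

open Set Real

section General

variable {L S : Type*} [LinearOrder L] [PartialOrder S] {σ : LowerSet L → S} (C : Sweep σ)
  {r s : L} {i j : ℕ}

theorem nonempty_signature {K ι : Type*} [Finite ι] {pos : K → Set L} {k : ℕ}
    (hk : ∀ c, (crossing pos c).encard ≤ k) (P : ι → Set L) :
    Nonempty (Sweep (signature pos P)) := by
  obtain ⟨n, x, h0, hn, hx⟩ := exists_seq_of_reflTransGen
    (fun c => .inr (.inl (IsAscent.refl _ c))) (reflTransGen_isStep_signature hk P)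
  exact ⟨⟨n, x, h0, hn, hx⟩⟩

theorem cut_monotone : Monotone C.cut :=
  monotone_nat_of_le_succ fun j => (C.isStep j).le

theorem exists_mem_cut_succ (r : L) : ∃ j, r ∈ C.cut (j + 1) :=
  ⟨C.n, by rw [C.cut_of_le _ (Nat.le_succ _)]; trivial⟩

open Classical in
/-- The index of the step at which `r` enters the sweep: `r` lies in `C.cut (C.idx r + 1)` but not
in `C.cut (C.idx r)`. -/
noncomputable def idx (r : L) : ℕ :=
  Nat.find (C.exists_mem_cut_succ r)

theorem mem_cut_iff : r ∈ C.cut j ↔ C.idx r < j := by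
  classical
  rcases j with _ | j
  · simp [C.cut_zero]
  rw [Nat.lt_succ_iff, idx]
  exact ⟨fun h => Nat.find_min' _ h, fun h =>
    C.cut_monotone (Nat.succ_le_succ h) (Nat.find_spec (C.exists_mem_cut_succ r))⟩

theorem idx_lt (r : L) : C.idx r < C.n :=
  C.mem_cut_iff.mp (by rw [C.cut_of_le _ le_rfl]; trivial)

theorem idx_mono : Monotone C.idx := fun r s h => by
  have hs : s ∈ C.cut (C.idx s + 1) := C.mem_cut_iff.mpr (Nat.lt_succ_self _)
  exact Nat.lt_succ_iff.mp (C.mem_cut_iff.mp ((C.cut _).lower h hs))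

/-- The `j`-th step is an ascent. -/
def Ascends (j : ℕ) : Prop :=
  IsAscent σ (C.cut j) (C.cut (j + 1))

/-- The `j`-th step is a descent. -/
def Descends (j : ℕ) : Prop :=
  IsDescent σ (C.cut j) (C.cut (j + 1))

theorem eq_of_idx_eq (hasc : ¬ C.Ascends (C.idx s)) (hdesc : ¬ C.Descends (C.idx s))
    (h : C.idx r = C.idx s) : r = s := by
  have hcov : C.cut (C.idx s) ⋖ C.cut (C.idx s + 1) :=
    (C.isStep _).resolve_right (not_or.mpr ⟨hasc, hdesc⟩)
  refine eq_of_mem_of_notMem_of_covBy hcov ?_ ?_ ?_ ?_ <;> rw [C.mem_cut_iff] <;> lia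

theorem strictMono_of_idx {β : Type*} [Preorder β] {f : L → β}
    (hlt : ∀ r s, C.idx r < C.idx s → f r < f s)
    (heq : ∀ r s, C.idx r = C.idx s → C.Ascends (C.idx s) ∨ C.Descends (C.idx s) → r < s →
      f r < f s) : StrictMono f := by
  intro r s hrs
  rcases (C.idx_mono hrs.le).lt_or_eq with h | h
  · exact hlt r s h
  · refine heq r s h ?_ hrs
    by_contra! hnot
    exact hrs.ne (C.eq_of_idx_eq hnot.1 hnot.2 h)

end General

variable {S : Type*} [PartialOrder S] {σ : LowerSet ℝ → S} (C : Sweep σ) {r s : ℝ} {j : ℕ}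

open Classical in
/-- Where the passing layout puts a vertex from position `r`. The points that enter at step `j` go
to a neighbourhood of the integer `j + 1`: on the left of it when the step is an ascent and on the
right when it is a descent, so that their cuts are charged for the cheaper end of the step. The
sigmoid keeps their order. A cover, which adds a single point, sends it to `j + 1`. -/
noncomputable def place (r : ℝ) : ℝ :=
  C.idx r + 1 + if C.Ascends (C.idx r) then (sigmoid r - 1) / 2 else
    if C.Descends (C.idx r) then sigmoid r / 2 else 0

theorem place_mem_Ioo (r : ℝ) : C.place r ∈ Ioo (C.idx r + 1 / 2 : ℝ) (C.idx r + 3 / 2) := by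
  have := sigmoid_pos r
  have := sigmoid_lt_one r
  rw [place, mem_Ioo]
  split_ifs <;> constructor <;> linarith

theorem ascends_of_place_lt (h : C.place r < C.idx r + 1) : C.Ascends (C.idx r) := by
  have := sigmoid_pos r
  by_contra hasc
  rw [place, if_neg hasc] at h
  split_ifs at h <;> linarith

theorem descends_of_lt_place (h : C.idx r + 1 < C.place r) : C.Descends (C.idx r) := by
  have := sigmoid_lt_one r
  rw [place] at h
  split_ifs at h with hasc hdesc <;> first | exact hdesc | linarith

theorem place_ne (h : C.Ascends (C.idx r) ∨ C.Descends (C.idx r)) :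
    C.place r ≠ C.idx r + 1 := by
  have := sigmoid_pos r
  have := sigmoid_lt_one r
  rw [place]
  split_ifs with hasc hdesc
  · linarith
  · linarith
  · exact absurd h (not_or.mpr ⟨hasc, hdesc⟩)

theorem place_eq (hasc : ¬ C.Ascends (C.idx r)) (hdesc : ¬ C.Descends (C.idx r)) :
    C.place r = C.idx r + 1 := by
  rw [place, if_neg hasc, if_neg hdesc, add_zero]

theorem place_strictMono : StrictMono C.place := by
  refine C.strictMono_of_idx (fun r s h => ?_) (fun r s h hel hrs => ?_)
  · have : (C.idx r + 1 : ℝ) ≤ C.idx s := by exact_mod_cast h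
    linarith [(C.place_mem_Ioo r).2, (C.place_mem_Ioo s).1]
  · have := sigmoid_strictMono hrs
    rw [place, place, h]
    split_ifs with hasc hdesc
    · linarith
    · linarith
    · exact absurd hel (not_or.mpr ⟨hasc, hdesc⟩)

theorem cut_le_below_place {y : ℝ} (h : j + 1 / 2 ≤ y) :
    C.cut j ≤ below C.place_strictMono.monotone y := by
  intro s (hs : s ∈ C.cut j)
  have : (C.idx s + 1 : ℝ) ≤ j := by exact_mod_cast C.mem_cut_iff.mp hs
  exact (C.place_mem_Ioo s).2.trans_le (by linarith)

theorem below_place_le_cut {y : ℝ} (h : y ≤ j + 1 / 2) :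
    below C.place_strictMono.monotone y ≤ C.cut j := by
  intro s (hs : C.place s < y)
  have : (C.idx s : ℝ) < j := by linarith [(C.place_mem_Ioo s).1]
  exact C.mem_cut_iff.mpr (by exact_mod_cast this)

theorem map_cut_le_map_below_place {y : ℝ} (hjy : j < y) (hyj : y < j + 1) :
    σ (C.cut j) ≤ σ (below C.place_strictMono.monotone y) := by
  rcases le_or_gt y (j + 1 / 2) with hy | hy
  · have hle := C.below_place_le_cut hy
    by_cases hge : C.cut j ≤ below C.place_strictMono.monotone y
    · rw [hge.antisymm hle]
    obtain ⟨r, hrj : r ∈ C.cut j, hr : ¬ C.place r < y⟩ := not_subset.mp hge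
    have hidx : C.idx r + 1 = j := by
      have : (j : ℝ) < (C.idx r + 2 : ℕ) := by
        push_cast
        linarith [(C.place_mem_Ioo r).2]
      have := C.mem_cut_iff.mp hrj
      norm_cast at *
      lia
    subst hidx
    push_cast at hjy
    have hdesc : C.Descends (C.idx r) := C.descends_of_lt_place (by linarith)
    exact (hdesc.2 _ ⟨C.cut_le_below_place (by linarith), hle⟩).1
  · have hge := C.cut_le_below_place hy.le
    by_cases hle : below C.place_strictMono.monotone y ≤ C.cut j
    · rw [hge.antisymm hle]
    obtain ⟨r, hr : C.place r < y, hrj : r ∉ C.cut j⟩ := not_subset.mp hle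
    have hidx : C.idx r = j := by
      have : (C.idx r : ℝ) < (j + 1 : ℕ) := by
        push_cast
        linarith [(C.place_mem_Ioo r).1]
      rw [C.mem_cut_iff] at hrj
      norm_cast at this
      lia
    subst hidx
    have hasc : C.Ascends (C.idx r) := C.ascends_of_place_lt (by linarith)
    exact (hasc.2 _ ⟨hge, C.below_place_le_cut (by push_cast; linarith)⟩).1

open Classical in
/-- Where the merged layout puts a vertex of `H` from position `r`. Layouts of a test are stretched
so that the integer `m` moves to `2 * m`, see `spread`, and the points that enter at step `j` go to
the gap `(2 * j + 1, 2 * j + 2)`, or to its right end when the step is a cover. -/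
noncomputable def thread (r : ℝ) : ℝ :=
  2 * C.idx r + 1 + if C.Ascends (C.idx r) ∨ C.Descends (C.idx r) then sigmoid r else 1

theorem thread_mem_Ioc (r : ℝ) : C.thread r ∈ Ioc (2 * C.idx r + 1 : ℝ) (2 * C.idx r + 2) := by
  have := sigmoid_pos r
  have := sigmoid_lt_one r
  rw [thread, mem_Ioc]
  split_ifs <;> constructor <;> linarith

theorem thread_strictMono : StrictMono C.thread := by
  refine C.strictMono_of_idx (fun r s h => ?_) (fun r s h hel hrs => ?_)
  · have : (C.idx r + 1 : ℝ) ≤ C.idx s := by exact_mod_cast h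
    linarith [(C.thread_mem_Ioc r).2, (C.thread_mem_Ioc s).1]
  · rw [thread, thread, h, if_pos hel, if_pos hel]
    linarith [sigmoid_strictMono hrs]

theorem thread_eq_iff :
    C.thread r = 2 * C.idx r + 2 ↔ ¬ (C.Ascends (C.idx r) ∨ C.Descends (C.idx r)) := by
  have := sigmoid_lt_one r
  rw [thread]
  split_ifs with h
  · exact ⟨fun heq => by linarith, fun hnot => absurd h hnot⟩
  · exact ⟨fun _ => h, fun _ => by ring⟩

end Sweep

/-! ### Cuts of a gluing -/

section Glued

open Set

variable {t k : ℕ}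

namespace BHyp

variable {L : Type*} (G H : BHyp t)

/-- The positions of the vertices of the hyperedge `e` in the layout `l`. -/
def edgePos (l : G.V → L) (e : G.E) : Set L :=
  {r | ∃ v, G.mem v e ∧ l v = r}

/-- The positions of the hyperedge `e` in `g`, together with the positions `P ℓ` of its labels `ℓ`,
which stand for the vertices that gluing adds to `e`. -/
def gluedPos (g : G.V → L) (P : Fin t → Set L) (e : G.E) : Set L :=
  G.edgePos g e ∪ {r | ∃ ℓ, G.bnd ℓ = .inr e ∧ r ∈ P ℓ}

/-- `ℓ` is the label by which gluing matches `x`. An object may carry several labels, and then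
`glueMapV` and `glueMapE` use the one picked by `Classical.choose`. -/
def IsChosenLabel (x : H.V ⊕ H.E) (ℓ : Fin t) : Prop :=
  ∃ h : ∃ i, H.bnd i = x, h.choose = ℓ

/-- The positions of the hyperedges of `H` that carry no label, and so remain hyperedges of their
own after gluing. -/
def privatePos (h : H.V → L) (e : {e : H.E // ∀ i, H.bnd i ≠ .inr e}) : Set L :=
  H.edgePos h e

/-- The positions of the label `ℓ`: `b ℓ` if `ℓ` labels a vertex, and otherwise those of the
hyperedge of `H` which gluing matches by `ℓ`. -/
def labelPos (h : H.V → L) (b : Fin t → L) (ℓ : Fin t) : Set L :=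
  {r | (H.bnd ℓ).isLeft ∧ b ℓ = r} ∪ {r | ∃ v e, H.IsChosenLabel (.inr e) ℓ ∧ H.mem v e ∧ h v = r}

variable {G H}

theorem IsChosenLabel.bnd_eq {x : H.V ⊕ H.E} {ℓ : Fin t} (h : H.IsChosenLabel x ℓ) :
    H.bnd ℓ = x := by
  obtain ⟨h, rfl⟩ := h
  exact h.choose_spec

theorem labelPos_eq_singleton {h : H.V → L} {b : Fin t → L} {ℓ : Fin t}
    (hℓ : (H.bnd ℓ).isLeft) : H.labelPos h b ℓ = {b ℓ} := by
  refine (union_eq_self_of_subset_right ?_).trans (by simp [hℓ, eq_comm])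
  rintro r ⟨v, e, he, -⟩
  simp [he.bnd_eq] at hℓ

theorem cutAt_eq_openCut (l : H.V → ℝ) (i : ℝ) : H.cutAt l i = openCut (H.edgePos l) i := by
  ext e
  constructor
  · rintro ⟨v, w, hv, hw, hvi, hiw⟩
    exact ⟨_, _, ⟨v, hv, rfl⟩, ⟨w, hw, rfl⟩, hvi, hiw⟩
  · rintro ⟨_, _, ⟨v, hv, rfl⟩, ⟨w, hw, rfl⟩, hvi, hiw⟩
    exact ⟨v, w, hv, hw, hvi, hiw⟩

theorem crossing_gluedPos_subset {L' : Type*} [LinearOrder L] [LinearOrder L'] {g : G.V → L}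
    {f : G.V → L'} {P : Fin t → Set L} {Q : Fin t → Set L'} {c : LowerSet L} {d : LowerSet L'}
    (hgf : ∀ v, g v ∈ c ↔ f v ∈ d) (hleft : leftOf P c ⊆ leftOf Q d)
    (hright : rightOf P c ⊆ rightOf Q d) :
    crossing (G.gluedPos g P) c ⊆ crossing (G.gluedPos f Q) d := by
  refine inter_subset_inter ?_ ?_
  · rintro e ⟨_, ⟨v, hv, rfl⟩ | ⟨ℓ, hℓ, hp⟩, hc⟩
    · exact ⟨f v, .inl ⟨v, hv, rfl⟩, (hgf v).mp hc⟩
    · obtain ⟨q, hq, hqd⟩ := hleft ⟨_, hp, hc⟩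
      exact ⟨q, .inr ⟨ℓ, hℓ, hq⟩, hqd⟩
  · rintro e ⟨_, ⟨v, hv, rfl⟩ | ⟨ℓ, hℓ, hp⟩, hc⟩
    · exact ⟨f v, .inl ⟨v, hv, rfl⟩, (hgf v).not.mp hc⟩
    · obtain ⟨q, hq, hqd⟩ := hright ⟨_, hp, hc⟩
      exact ⟨q, .inr ⟨ℓ, hℓ, hq⟩, hqd⟩

end BHyp

section Glue

open BHyp

variable {L : Type*} {G H : BHyp t} (hgl : Gluable G H)

theorem glueMapV_eq_inl_iff {v : H.V} {u : G.V} :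
    glueMapV G H hgl v = .inl u ↔ ∃ ℓ, H.IsChosenLabel (.inl v) ℓ ∧ G.bnd ℓ = .inl u := by
  by_cases h : ∃ i, H.bnd i = .inl v
  · simp only [glueMapV, dif_pos h, Sum.inl.injEq]
    exact (Sum.getLeft_eq_iff _).trans
      ⟨fun hu => ⟨_, ⟨h, rfl⟩, hu⟩, fun ⟨_, ⟨_, hℓ⟩, hu⟩ => hℓ ▸ hu⟩
  · simp only [glueMapV, dif_neg h, reduceCtorEq, false_iff]
    exact fun ⟨_, ⟨h', _⟩, _⟩ => h h'

theorem glueMapV_eq_inr_iff {v : H.V} {w : {v : H.V // ∀ i, H.bnd i ≠ .inl v}} :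
    glueMapV G H hgl v = .inr w ↔ v = w := by
  by_cases h : ∃ i, H.bnd i = .inl v
  · simp only [glueMapV, dif_pos h, reduceCtorEq, false_iff]
    rintro rfl
    exact h.elim w.2
  · simp only [glueMapV, dif_neg h, Sum.inr.injEq, Subtype.ext_iff]

theorem glueMapE_eq_inl_iff {e : H.E} {e' : G.E} :
    glueMapE G H hgl e = .inl e' ↔ ∃ ℓ, H.IsChosenLabel (.inr e) ℓ ∧ G.bnd ℓ = .inr e' := by
  by_cases h : ∃ i, H.bnd i = .inr e
  · simp only [glueMapE, dif_pos h, Sum.inl.injEq, Sum.getRight_eq_iff]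
    exact ⟨fun hu => ⟨_, ⟨h, rfl⟩, hu⟩, fun ⟨_, ⟨_, hℓ⟩, hu⟩ => hℓ ▸ hu⟩
  · simp only [glueMapE, dif_neg h, reduceCtorEq, false_iff]
    exact fun ⟨_, ⟨h', _⟩, _⟩ => h h'

theorem glueMapE_eq_inr_iff {e : H.E} {e' : {e : H.E // ∀ i, H.bnd i ≠ .inr e}} :
    glueMapE G H hgl e = .inr e' ↔ e = e' := by
  by_cases h : ∃ i, H.bnd i = .inr e
  · simp only [glueMapE, dif_pos h, reduceCtorEq, false_iff]
    rintro rfl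
    exact h.elim e'.2
  · simp only [glueMapE, dif_neg h, Sum.inr.injEq, Subtype.ext_iff]

theorem edgePos_glueHyp_inl (l : (glueHyp G H hgl).V → L) (b : Fin t → L) (e : G.E) :
    (glueHyp G H hgl).edgePos l (.inl e) =
      G.gluedPos (l ∘ .inl) (H.labelPos (l ∘ glueMapV G H hgl) b) e := by
  ext r
  constructor
  · rintro ⟨_, ⟨v, e', rfl, he, hm⟩ | ⟨v, e', hm, rfl, he⟩, rfl⟩
    · cases he
      exact .inl ⟨v, hm, rfl⟩
    · obtain ⟨ℓ, hℓ, hG⟩ := (glueMapE_eq_inl_iff hgl).mp he.symm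
      exact .inr ⟨ℓ, hG, .inr ⟨v, e', hℓ, hm, rfl⟩⟩
  · rintro (⟨v, hm, rfl⟩ | ⟨ℓ, hG, ⟨hℓ, -⟩ | ⟨v, e', hℓ, hm, rfl⟩⟩)
    · exact ⟨.inl v, .inl ⟨v, e, rfl, rfl, hm⟩, rfl⟩
    · simp [← hgl ℓ, hG] at hℓ
    · exact ⟨_, .inr ⟨v, e', hm, rfl, ((glueMapE_eq_inl_iff hgl).mpr ⟨ℓ, hℓ, hG⟩).symm⟩, rfl⟩

theorem edgePos_glueHyp_inr (l : (glueHyp G H hgl).V → L)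
    (e : {e : H.E // ∀ i, H.bnd i ≠ .inr e}) :
    (glueHyp G H hgl).edgePos l (.inr e) = H.privatePos (l ∘ glueMapV G H hgl) e := by
  ext r
  constructor
  · rintro ⟨_, ⟨_, _, _, he, _⟩ | ⟨v, e', hm, rfl, he⟩, rfl⟩
    · cases he
    · obtain rfl := (glueMapE_eq_inr_iff hgl).mp he.symm
      exact ⟨v, hm, rfl⟩
  · rintro ⟨v, hm, rfl⟩
    exact ⟨_, .inr ⟨v, e, hm, rfl, ((glueMapE_eq_inr_iff hgl).mpr rfl).symm⟩, rfl⟩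

theorem encard_crossing_edgePos_glueHyp [LinearOrder L] (l : (glueHyp G H hgl).V → L)
    (b : Fin t → L) (c : LowerSet L) :
    (crossing ((glueHyp G H hgl).edgePos l) c).encard =
      (crossing (G.gluedPos (l ∘ .inl) (H.labelPos (l ∘ glueMapV G H hgl) b)) c).encard +
        (crossing (H.privatePos (l ∘ glueMapV G H hgl)) c).encard := by
  rw [← funext (edgePos_glueHyp_inl hgl l b), ← funext (edgePos_glueHyp_inr hgl l)]
  exact encard_crossing_sum _ c

end Glue

/-! ### The test of a sweep -/

/-- The integer positions which the test `T` gives to the label `ℓ`. -/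
def CwTest.labelPos (T : CwTest t k) (ℓ : Fin t) : Set ℝ :=
  {x | ∃ j : ℕ, ℓ ∈ T.Elab j ∧ x = j}

theorem posSet_eq_gluedPos (G : BHyp t) (T : CwTest t k) (f : G.V → ℝ) :
    posSet G T f = G.gluedPos f T.labelPos := by
  refine funext fun e => congrArg (G.edgePos f e ∪ ·) (ext fun x => ?_)
  simp only [CwTest.labelPos, mem_ofPred_eq, exists_and_left]

theorem natCast_mem_iff {i j : ℕ} {d : LowerSet ℝ} (hj : (j : ℝ) ∈ d) (hj' : (j + 1 : ℝ) ∉ d) :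
    (i : ℝ) ∈ d ↔ i ≤ j := by
  refine ⟨fun hi => ?_, fun hi => d.lower (Nat.cast_le.mpr hi) hj⟩
  by_contra! hji
  exact hj' (d.lower (by exact_mod_cast hji) hi)

namespace Sweep

section Signature

variable {K ι L : Type*} [LinearOrder L] {pos : K → Set L} {P : ι → Set L}
  (C : Sweep (signature pos P)) {ℓ : ι} {r : L}

theorem not_ascends_of_eq_singleton (hℓ : P ℓ = {r}) : ¬ C.Ascends (C.idx r) := by
  intro h
  have := mem_iff_mem_of_signature_le hℓ (h.2 _ ⟨h.1, le_rfl⟩).1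
  simp [C.mem_cut_iff] at this

theorem not_descends_of_eq_singleton (hℓ : P ℓ = {r}) : ¬ C.Descends (C.idx r) := by
  intro h
  have := mem_iff_mem_of_signature_le hℓ (h.2 _ ⟨le_rfl, h.1⟩).1
  simp [C.mem_cut_iff] at this

theorem ascends_or_descends_of_notMem (hpos : ∀ e, r ∉ pos e) (hP : ∀ ℓ, r ∉ P ℓ) :
    C.Ascends (C.idx r) ∨ C.Descends (C.idx r) := by
  rcases C.isStep (C.idx r) with h | h
  · exact .inl (isAscent_signature_of_covBy h (C.mem_cut_iff.mpr (Nat.lt_succ_self _))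
      (fun hr => (C.mem_cut_iff.mp hr).false) hpos hP)
  · exact h

end Signature

section Test

variable {K L : Type*} [LinearOrder L] {pos : K → Set L} {P : Fin t → Set L}
  (C : Sweep (signature pos P)) (hk : ∀ c, (crossing pos c).encard ≤ k) (b : Fin t → L)

/-- The test of a sweep through the positions `pos` of private hyperedges and `P` of labels, with
boundary vertices at `b`. Position `j + 1` stands for the step from `C.cut j` to `C.cut (j + 1)`, so
the weight after position `j` is that of `C.cut j`, and a label occupies the position of a step when
it has a position before the end and one after the start of that step. -/
noncomputable def test : CwTest t k where
  n := C.n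
  π ℓ := ⟨C.idx (b ℓ), C.idx_lt _⟩
  w j := (crossing pos (C.cut j)).ncard
  w_le j _ := by
    exact_mod_cast (finite_of_encard_le_coe (hk (C.cut j))).cast_ncard_eq.trans_le (hk _)
  Elab j := leftOf P (C.cut j) ∩ rightOf P (C.cut (j - 1))
  Elab_convex ℓ p q r hpq hqr hp hr :=
    ⟨leftOf_mono P (C.cut_monotone hpq) hp.1,
      rightOf_anti P (C.cut_monotone (Nat.sub_le_sub_right hqr 1)) hr.2⟩
  Elab_bound j hj := by
    rw [C.cut_of_le (j - 1) (by lia)]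
    exact eq_empty_of_forall_notMem fun _ ⟨_, _, _, h⟩ => h trivial

theorem mem_test_Elab_idx_add_one {ℓ : Fin t} {r : L} (hr : r ∈ P ℓ) :
    ℓ ∈ (C.test hk b).Elab (C.idx r + 1) :=
  ⟨⟨r, hr, C.mem_cut_iff.mpr (Nat.lt_succ_self _)⟩,
    ⟨r, hr, fun h => (C.mem_cut_iff.mp h).false⟩⟩

variable {j : ℕ} {d : LowerSet ℝ} (hj : (j : ℝ) ∈ d) (hj' : (j + 1 : ℝ) ∉ d)

include hj hj' in
theorem leftOf_labelPos_test : leftOf (C.test hk b).labelPos d = leftOf P (C.cut j) := by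
  ext ℓ
  constructor
  · rintro ⟨_, ⟨i, hi, rfl⟩, hid⟩
    exact leftOf_mono P (C.cut_monotone ((natCast_mem_iff hj hj').mp hid)) hi.1
  · rintro ⟨r, hr, hrj⟩
    exact ⟨_, ⟨_, C.mem_test_Elab_idx_add_one hk b hr, rfl⟩,
      (natCast_mem_iff hj hj').mpr (C.mem_cut_iff.mp hrj)⟩

include hj hj' in
theorem rightOf_labelPos_test : rightOf (C.test hk b).labelPos d = rightOf P (C.cut j) := by
  ext ℓ
  constructor
  · rintro ⟨_, ⟨i, hi, rfl⟩, hid⟩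
    rw [natCast_mem_iff hj hj'] at hid
    exact rightOf_anti P (C.cut_monotone (by lia)) hi.2
  · rintro ⟨r, hr, hrj⟩
    refine ⟨_, ⟨_, C.mem_test_Elab_idx_add_one hk b hr, rfl⟩, ?_⟩
    rw [natCast_mem_iff hj hj']
    rw [C.mem_cut_iff] at hrj
    lia

end Test

section Forward

variable {K : Type*} {pos : K → Set ℝ} {P : Fin t → Set ℝ} (C : Sweep (signature pos P))
  (hk : ∀ c, (crossing pos c).encard ≤ k) (b : Fin t → ℝ) {G : BHyp t} {g : G.V → ℝ}

theorem crossing_gluedPos_test_subset {i : ℝ} (hi : 0 ≤ i) (hne : i ≠ ⌊i⌋₊) :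
    crossing (G.gluedPos (C.place ∘ g) (C.test hk b).labelPos) (LowerSet.Iio i) ⊆
      crossing (G.gluedPos g P) (below C.place_strictMono.monotone i) := by
  have hlt : (⌊i⌋₊ : ℝ) < i := (Nat.floor_le hi).lt_of_ne' hne
  have hσ := C.map_cut_le_map_below_place hlt (Nat.lt_floor_add_one i)
  have hmem : ((⌊i⌋₊ + 1 : ℝ)) ∉ LowerSet.Iio i := (Nat.lt_floor_add_one i).not_gt
  refine BHyp.crossing_gluedPos_subset (fun v => Iff.rfl) ?_ ?_
  · rw [C.leftOf_labelPos_test hk b hlt hmem]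
    exact hσ.2.1
  · rw [C.rightOf_labelPos_test hk b hlt hmem]
    exact hσ.2.2

theorem passes_test (hg : Function.Injective g)
    (hbnd : ∀ ℓ v, G.bnd ℓ = .inl v → g v = b ℓ ∧ P ℓ = {b ℓ})
    (hfree : ∀ v, (∀ ℓ, G.bnd ℓ ≠ .inl v) → (∀ e, g v ∉ pos e) ∧ ∀ ℓ, g v ∉ P ℓ)
    (hcut : ∀ c, (crossing (G.gluedPos g P) c).encard + (crossing pos c).encard ≤ k) :
    Passes G (C.test hk b) := by
  refine ⟨C.place ∘ g, C.place_strictMono.injective.comp hg, fun ℓ v hv => ?_, fun v hv => ?_,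
    fun i hi _ hne => ?_⟩
  · obtain ⟨hgv, hP⟩ := hbnd ℓ v hv
    rw [Function.comp_apply, hgv]
    exact C.place_eq (C.not_ascends_of_eq_singleton hP) (C.not_descends_of_eq_singleton hP)
  · obtain ⟨hpos, hP⟩ := hfree v hv
    have hne := C.place_ne (C.ascends_or_descends_of_notMem hpos hP)
    have hidx := C.idx_lt (g v)
    obtain ⟨hlow, hup⟩ := C.place_mem_Ioo (g v)
    rcases hne.lt_or_gt with h | h
    · exact ⟨C.idx (g v), hidx.le, by simpa using by linarith, h⟩
    · exact ⟨C.idx (g v) + 1, hidx, by simpa using h, by simpa using by linarith⟩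
  · have hne' : i ≠ ⌊i⌋₊ := fun h => hne ⟨⌊i⌋₊, by exact_mod_cast h⟩
    have hlt := (Nat.floor_le hi.le).lt_of_ne' hne'
    have hw := (C.map_cut_le_map_below_place hlt (Nat.lt_floor_add_one i)).1
    have hjoint := (openCut_subset_crossing (posSet G (C.test hk b) (C.place ∘ g)) i).trans
      (posSet_eq_gluedPos G _ _ ▸ C.crossing_gluedPos_test_subset hk b hi.le hne')
    rw [Int.floor_toNat]
    refine (add_le_add (encard_le_encard hjoint) (Nat.cast_le.mpr hw)).trans ?_
    rw [signature, (finite_of_encard_le_coe (hk _)).cast_ncard_eq]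
    exact hcut _

end Forward

end Sweep

/-! ### Merging two layouts -/

/-- Stretches the line so that the integer `m` moves to `2 * m` and the interval before `m + 1` ends
at `2 * m + 1`, which leaves a gap for inserted vertices just before each integer. -/
noncomputable def spread (p : ℝ) : ℝ :=
  p + ⌊p⌋

theorem spread_strictMono : StrictMono spread := fun _ _ h =>
  add_lt_add_of_lt_of_le h (Int.cast_le.mpr (Int.floor_mono h.le))

theorem spread_natCast (m : ℕ) : spread m = 2 * m := by
  rw [spread, Int.floor_natCast, Int.cast_natCast, two_mul]

theorem spread_natCast_add_one (m : ℕ) : spread (m + 1) = 2 * m + 2 := by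
  rw [← Nat.cast_add_one, spread_natCast]
  push_cast
  ring

theorem spread_lt {m : ℕ} {p : ℝ} (h : p < m + 1) : spread p < 2 * m + 1 := by
  have hfloor : (⌊p⌋ : ℝ) ≤ m := by
    exact_mod_cast Int.lt_add_one_iff.mp (Int.floor_lt.mpr (by exact_mod_cast h))
  exact (add_lt_add_of_lt_of_le h hfloor).trans_eq (by ring)

theorem spread_mem_Ioo {m : ℕ} {p : ℝ} (hmp : m < p) (hpm : p < m + 1) :
    spread p ∈ Ioo (2 * m : ℝ) (2 * m + 1) :=
  ⟨(spread_natCast m).symm.trans_lt (spread_strictMono hmp), spread_lt hpm⟩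

section Image

variable {K : Type*} {pos : K → Set ℝ} {χ : ℝ → ℝ} (hχ : Monotone χ) (y : ℝ)

theorem leftOf_image :
    leftOf (fun e => χ '' pos e) (LowerSet.Iio y) = leftOf pos (below hχ y) :=
  ext fun _ => exists_mem_image

theorem rightOf_image :
    rightOf (fun e => χ '' pos e) (LowerSet.Iio y) = rightOf pos (below hχ y) :=
  ext fun _ => exists_mem_image

theorem crossing_image :
    crossing (fun e => χ '' pos e) (LowerSet.Iio y) = crossing pos (below hχ y) :=
  congrArg₂ (· ∩ ·) (leftOf_image hχ y) (rightOf_image hχ y)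

end Image

namespace BHyp

variable {L L' : Type*} (H : BHyp t) (χ : L → L')

theorem privatePos_comp (h : H.V → L) (e : {e : H.E // ∀ i, H.bnd i ≠ .inr e}) :
    H.privatePos (χ ∘ h) e = χ '' H.privatePos h e := by
  ext
  simp [privatePos, edgePos]

theorem labelPos_comp (h : H.V → L) (b : Fin t → L) (ℓ : Fin t) :
    H.labelPos (χ ∘ h) (χ ∘ b) ℓ = χ '' H.labelPos h b ℓ := by
  rw [labelPos, labelPos, image_union]
  refine congrArg₂ (· ∪ ·) ?_ ?_ <;> ext <;> simp [and_assoc]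

end BHyp

namespace Sweep

theorem below_thread_eq_or {S : Type*} [PartialOrder S] {σ : LowerSet ℝ → S} (C : Sweep σ)
    {i : ℝ} {j : ℕ} (hji : 2 * j < i) (hij : i ≤ 2 * j + 2) :
    below C.thread_strictMono.monotone i = C.cut j ∨
      j < C.n ∧ 2 * j + 1 < i ∧ (C.Ascends j ∨ C.Descends j) ∧
        below C.thread_strictMono.monotone i ∈ Icc (C.cut j) (C.cut (j + 1)) := by
  have hle : C.cut j ≤ below C.thread_strictMono.monotone i := by
    intro s (hs : s ∈ C.cut j)
    have : (C.idx s + 1 : ℝ) ≤ j := by exact_mod_cast C.mem_cut_iff.mp hs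
    exact (C.thread_mem_Ioc s).2.trans_lt (by linarith)
  have hidx {s : ℝ} (hs : C.thread s < i) : C.idx s < j + 1 := by
    have : (C.idx s : ℝ) < j + 1 := by linarith [(C.thread_mem_Ioc s).1]
    exact_mod_cast this
  by_cases hge : below C.thread_strictMono.monotone i ≤ C.cut j
  · exact .inl (hge.antisymm hle)
  obtain ⟨r, hr : C.thread r < i, hrj : r ∉ C.cut j⟩ := not_subset.mp hge
  have hrj' : C.idx r = j := by
    have := hidx hr
    rw [C.mem_cut_iff] at hrj
    lia
  subst hrj'
  refine .inr ⟨C.idx_lt r, (C.thread_mem_Ioc r).1.trans hr, ?_, hle,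
    fun s hs => C.mem_cut_iff.mpr (hidx hs)⟩
  by_contra hnot
  linarith [C.thread_eq_iff.mpr hnot]

theorem exists_below_thread_le {S : Type*} [PartialOrder S] {σ : LowerSet ℝ → S} (C : Sweep σ)
    {i : ℝ} (hi : 0 < i) (hin : i ≤ 2 * C.n + 2) :
    ∃ j ≤ C.n, ∃ d : LowerSet ℝ, (j : ℝ) ∈ d ∧ (j + 1 : ℝ) ∉ d ∧
      σ (below C.thread_strictMono.monotone i) ≤ σ (C.cut j) ∧
      ∀ p : ℝ, (∀ m : ℕ, p = m + 1 → ¬ C.Ascends m) → (spread p < i ↔ p ∈ d) := by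
  obtain ⟨j, hji, hij⟩ : ∃ j : ℕ, (2 * j : ℝ) < i ∧ i ≤ 2 * j + 2 := by
    obtain ⟨j, hj⟩ := Nat.exists_eq_succ_of_ne_zero (Nat.ceil_pos.mpr (half_pos hi)).ne'
    obtain ⟨hji, hij⟩ := (Nat.ceil_eq_iff j.succ_ne_zero).mp hj
    push_cast [Nat.succ_eq_add_one, Nat.add_sub_cancel] at hji hij
    exact ⟨j, by linarith, by linarith⟩
  have hjn : j ≤ C.n := by
    have : (j : ℝ) < C.n + 1 := by linarith
    exact Nat.lt_succ_iff.mp (by exact_mod_cast this)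
  have hmem : (j : ℝ) ∈ below spread_strictMono.monotone i := (spread_natCast j).trans_lt hji
  have hnotMem : (j + 1 : ℝ) ∉ below spread_strictMono.monotone i :=
    (hij.trans_eq (spread_natCast_add_one j).symm).not_gt
  rcases C.below_thread_eq_or hji hij with hc | ⟨hjn', hlt, hasc | hdesc, hc⟩
  · exact ⟨j, hjn, _, hmem, hnotMem, (congrArg σ hc).le, fun p _ => Iff.rfl⟩
  · refine ⟨j + 1, hjn', LowerSet.Iic (j + 1), by simp, by simp, (hasc.2 _ hc).2, fun p hp => ?_⟩
    constructor
    · exact fun hpi => (spread_strictMono.lt_iff_lt.mp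
        (hpi.trans_le (hij.trans_eq (spread_natCast_add_one j).symm))).le
    · exact fun (hpj : p ≤ j + 1) =>
        (spread_lt (hpj.lt_of_ne fun heq => hp j heq hasc)).trans hlt
  · exact ⟨j, hjn, _, hmem, hnotMem, (hdesc.2 _ hc).2, fun p _ => Iff.rfl⟩

end Sweep

theorem encard_crossing_posSet_add_le {G : BHyp t} {T : CwTest t k} {f : G.V → ℝ}
    (hcut : ∀ i : ℝ, 0 < i → i < T.n + 1 → (¬ ∃ m : ℤ, i = m) →
      (jointCut G T f i).encard + (T.w ⌊i⌋.toNat : ℕ∞) ≤ k)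
    {j : ℕ} (hjn : j ≤ T.n) {d : LowerSet ℝ} (hj : (j : ℝ) ∈ d) (hj' : (j + 1 : ℝ) ∉ d) :
    (crossing (posSet G T f) d).encard + T.w j ≤ k := by
  refine encard_crossing_add_le hj hj' fun y ⟨hjy, hyj⟩ => ?_
  have hfloor : ⌊y⌋ = j := Int.floor_eq_iff.mpr ⟨by exact_mod_cast hjy.le, by exact_mod_cast hyj⟩
  have hjn' : (j : ℝ) ≤ T.n := Nat.cast_le.mpr hjn
  have hnotInt : ¬ ∃ m : ℤ, y = m := by
    rintro ⟨m, rfl⟩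
    rw [Int.floor_intCast] at hfloor
    exact hjy.ne' (by exact_mod_cast hfloor)
  have h := hcut y (j.cast_nonneg.trans_lt hjy) (by linarith) hnotInt
  rwa [hfloor, Int.toNat_natCast] at h

namespace Sweep

section Merge

variable {K : Type*} {pos : K → Set ℝ} {P : Fin t → Set ℝ} (C : Sweep (signature pos P))
  (hk : ∀ c, (crossing pos c).encard ≤ k) (b : Fin t → ℝ) {G : BHyp t} {f : G.V → ℝ}

theorem encard_crossing_spread_add_crossing_thread_le
    (hf : ∀ v (m : ℕ), f v = m + 1 → ¬ C.Ascends m)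
    (hcut : ∀ i : ℝ, 0 < i → i < C.n + 1 → (¬ ∃ m : ℤ, i = m) →
      (jointCut G (C.test hk b) f i).encard + ((C.test hk b).w ⌊i⌋.toNat : ℕ∞) ≤ k)
    {i : ℝ} (hi : 0 < i) (hin : i ≤ 2 * C.n + 2) :
    (crossing (G.gluedPos (spread ∘ f) fun ℓ => C.thread '' P ℓ) (LowerSet.Iio i)).encard +
      (crossing (fun e => C.thread '' pos e) (LowerSet.Iio i)).encard ≤ k := by
  obtain ⟨j, hjn, d, hj, hj', hσ, hd⟩ := C.exists_below_thread_le hi hin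
  have hglued : crossing (G.gluedPos (spread ∘ f) fun ℓ => C.thread '' P ℓ) (LowerSet.Iio i) ⊆
      crossing (posSet G (C.test hk b) f) d := by
    rw [posSet_eq_gluedPos]
    refine BHyp.crossing_gluedPos_subset (fun v => hd _ (hf v)) ?_ ?_
    · rw [C.leftOf_labelPos_test hk b hj hj', leftOf_image C.thread_strictMono.monotone]
      exact hσ.2.1
    · rw [C.rightOf_labelPos_test hk b hj hj', rightOf_image C.thread_strictMono.monotone]
      exact hσ.2.2
  have hprivate : (crossing (fun e => C.thread '' pos e) (LowerSet.Iio i)).encard ≤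
      (C.test hk b).w j := by
    rw [crossing_image C.thread_strictMono.monotone,
      ← (finite_of_encard_le_coe (hk _)).cast_ncard_eq]
    exact Nat.cast_le.mpr hσ.1
  exact (add_le_add (encard_le_encard hglued) hprivate).trans
    (encard_crossing_posSet_add_le hcut hjn hj hj')

end Merge

section Backward

variable {G H : BHyp t} {h : H.V → ℝ} {b : Fin t → ℝ}
  (C : Sweep (signature (H.privatePos h) (H.labelPos h b)))

theorem thread_of_isLeft {ℓ : Fin t} (hℓ : (H.bnd ℓ).isLeft) :
    C.thread (b ℓ) = 2 * C.idx (b ℓ) + 2 :=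
  C.thread_eq_iff.mpr (not_or.mpr
    ⟨C.not_ascends_of_eq_singleton (BHyp.labelPos_eq_singleton hℓ),
      C.not_descends_of_eq_singleton (BHyp.labelPos_eq_singleton hℓ)⟩)

/-- The layout of `G ⊕ H` that merges the layout `f` of `G` with the layout `h` of `H`. -/
noncomputable def mergedLayout (hgl : Gluable G H) (f : G.V → ℝ) : (glueHyp G H hgl).V → ℝ :=
  Sum.elim (spread ∘ f) (C.thread ∘ h ∘ Subtype.val)

variable (hgl : Gluable G H) {f : G.V → ℝ}
  (hf : Function.Injective f)
  (hbnd : ∀ ℓ v, G.bnd ℓ = .inl v → f v = C.idx (b ℓ) + 1)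
  (hfree : ∀ v, (∀ ℓ, G.bnd ℓ ≠ .inl v) → ∃ j : ℕ, j ≤ C.n ∧ (j : ℝ) < f v ∧ f v < j + 1)

include hgl hbnd in
theorem spread_of_bnd_eq {ℓ : Fin t} {v : G.V} (hℓ : G.bnd ℓ = .inl v) :
    spread (f v) = C.thread (b ℓ) := by
  rw [hbnd ℓ v hℓ, spread_natCast_add_one, C.thread_of_isLeft (by rw [← hgl ℓ, hℓ]; rfl)]

include hbnd in
theorem mergedLayout_comp_glueMapV
    (hb : ∀ v ℓ, H.IsChosenLabel (.inl v) ℓ → h v = b ℓ) :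
    C.mergedLayout hgl f ∘ glueMapV G H hgl = C.thread ∘ h := by
  ext v
  change Sum.elim (spread ∘ f) (C.thread ∘ h ∘ Subtype.val) (glueMapV G H hgl v) = C.thread (h v)
  rcases hv : glueMapV G H hgl v with u | w
  · obtain ⟨ℓ, hℓ, hG⟩ := (glueMapV_eq_inl_iff hgl).mp hv
    rw [hb v ℓ hℓ]
    exact C.spread_of_bnd_eq hgl hbnd hG
  · obtain rfl := (glueMapV_eq_inr_iff hgl).mp hv
    rfl

include hgl hbnd hfree in
theorem spread_ne_thread {r : ℝ} (hr : ∀ ℓ, (H.bnd ℓ).isLeft → r ≠ b ℓ) (v : G.V) :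
    spread (f v) ≠ C.thread r := by
  by_cases hv : ∃ ℓ, G.bnd ℓ = .inl v
  · obtain ⟨ℓ, hℓ⟩ := hv
    have hℓ' : (H.bnd ℓ).isLeft := by rw [← hgl ℓ, hℓ]; rfl
    rw [C.spread_of_bnd_eq hgl hbnd hℓ]
    exact (C.thread_strictMono.injective.ne (hr ℓ hℓ')).symm
  · obtain ⟨j, -, hj, hj'⟩ := hfree v (not_exists.mp hv)
    intro heq
    obtain ⟨hlow, hup⟩ := C.thread_mem_Ioc r
    obtain ⟨hlow', hup'⟩ := spread_mem_Ioo hj hj'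
    have h1 : (C.idx r : ℝ) < j := by linarith
    have h2 : (j : ℝ) < C.idx r + 1 := by linarith
    norm_cast at h1 h2
    lia

include hf hbnd hfree in
theorem mergedLayout_injective
    (hb : ∀ v, (∀ i, H.bnd i ≠ .inl v) → ∀ ℓ, (H.bnd ℓ).isLeft → h v ≠ b ℓ)
    (hinj : InjOn h {v | ∀ i, H.bnd i ≠ .inl v}) :
    Function.Injective (C.mergedLayout hgl f) :=
  (spread_strictMono.injective.comp hf).sumElim
    (C.thread_strictMono.injective.comp hinj.injective)
    fun v w => C.spread_ne_thread hgl hbnd hfree (hb w w.2) v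

include hbnd hfree in
theorem mergedLayout_mem_Ioo (x : (glueHyp G H hgl).V) :
    C.mergedLayout hgl f x ∈ Ioo (0 : ℝ) (2 * C.n + 2) := by
  rcases x with v | w
  · have hfv : 0 < f v ∧ f v < C.n + 1 := by
      by_cases hv : ∃ ℓ, G.bnd ℓ = .inl v
      · obtain ⟨ℓ, hℓ⟩ := hv
        rw [hbnd ℓ v hℓ]
        have : (C.idx (b ℓ) : ℝ) < C.n := Nat.cast_lt.mpr (C.idx_lt _)
        exact ⟨by positivity, by linarith⟩
      · obtain ⟨j, hjn, hj, hj'⟩ := hfree v (not_exists.mp hv)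
        have : (j : ℝ) ≤ C.n := Nat.cast_le.mpr hjn
        exact ⟨j.cast_nonneg.trans_lt hj, by linarith⟩
    have hzero : spread 0 = 0 := by simpa using spread_natCast 0
    exact ⟨hzero.symm.trans_lt (spread_strictMono hfv.1),
      (spread_strictMono hfv.2).trans_eq (spread_natCast_add_one _)⟩
  · obtain ⟨hlow, hup⟩ := C.thread_mem_Ioc (h w)
    have : (C.idx (h w) + 1 : ℝ) ≤ C.n := by exact_mod_cast C.idx_lt (h w)
    exact ⟨(by positivity : (0 : ℝ) < 2 * C.idx (h w) + 1).trans hlow, hup.trans_lt (by linarith)⟩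

include hgl hbnd hfree in
theorem not_ascends_of_eq_add_one {v : G.V} {m : ℕ} (hv : f v = m + 1) :
    ¬ C.Ascends m := by
  by_cases hv' : ∃ ℓ, G.bnd ℓ = .inl v
  · obtain ⟨ℓ, hℓ⟩ := hv'
    obtain rfl : m = C.idx (b ℓ) := by exact_mod_cast add_right_cancel (hv.symm.trans (hbnd ℓ v hℓ))
    exact C.not_ascends_of_eq_singleton
      (BHyp.labelPos_eq_singleton (by rw [← hgl ℓ, hℓ]; rfl))
  · obtain ⟨j, -, hj, hj'⟩ := hfree v (not_exists.mp hv')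
    rw [hv] at hj hj'
    norm_cast at hj hj'
    lia

theorem cutwidthAtMost_of_passes_test
    (hk : ∀ c, (crossing (H.privatePos h) c).encard ≤ k)
    (hb : ∀ v ℓ, H.IsChosenLabel (.inl v) ℓ → h v = b ℓ)
    (hne : ∀ v, (∀ i, H.bnd i ≠ .inl v) → ∀ ℓ, (H.bnd ℓ).isLeft → h v ≠ b ℓ)
    (hinj : InjOn h {v | ∀ i, H.bnd i ≠ .inl v}) (hG : Passes G (C.test hk b)) :
    (glueHyp G H hgl).cutwidthAtMost k := by
  obtain ⟨f, hf, hbnd, hfree, hcut⟩ := hG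
  refine ⟨C.mergedLayout hgl f, C.mergedLayout_injective hgl hf hbnd hfree hne hinj, fun i => ?_⟩
  rcases ((glueHyp G H hgl).cutAt (C.mergedLayout hgl f) i).eq_empty_or_nonempty with
    hempty | ⟨_, v, w, -, -, hvi, hiw⟩
  · simp [hempty]
  have hi : 0 < i := (C.mergedLayout_mem_Ioo hgl hbnd hfree v).1.trans hvi
  have hin : i < 2 * C.n + 2 := hiw.trans (C.mergedLayout_mem_Ioo hgl hbnd hfree w).2
  rw [BHyp.cutAt_eq_openCut]
  refine (encard_le_encard (openCut_subset_crossing _ i)).trans ?_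
  rw [encard_crossing_edgePos_glueHyp hgl _ (C.thread ∘ b),
    C.mergedLayout_comp_glueMapV hgl hbnd hb, funext (H.labelPos_comp C.thread h b),
    funext (H.privatePos_comp C.thread h)]
  exact C.encard_crossing_spread_add_crossing_thread_le hk b
    (fun v m => C.not_ascends_of_eq_add_one hgl hbnd hfree) hcut hi hin.le

end Backward

end Sweep

/-- The position of the vertex labeled `ℓ` in the layout `g`, with the junk value `0` when `ℓ`
labels a hyperedge. -/
noncomputable def BHyp.boundaryPos (G : BHyp t) (g : G.V → ℝ) (ℓ : Fin t) : ℝ :=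
  Sum.elim g (fun _ => 0) (G.bnd ℓ)

section Exchange

variable {G H : BHyp t} (hgl : Gluable G H) {l : (glueHyp G H hgl).V → ℝ}

theorem boundaryPos_of_bnd_eq {g : G.V → ℝ} {ℓ : Fin t} {u : G.V} (hℓ : G.bnd ℓ = .inl u) :
    G.boundaryPos g ℓ = g u := by
  rw [BHyp.boundaryPos, hℓ, Sum.elim_inl]

include hgl in
theorem exists_boundaryPos_eq {ℓ : Fin t} (hℓ : (H.bnd ℓ).isLeft) (g : G.V → ℝ) :
    ∃ u, G.bnd ℓ = .inl u ∧ G.boundaryPos g ℓ = g u := by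
  obtain ⟨u, hu⟩ := Sum.isLeft_iff.mp ((hgl ℓ).trans hℓ)
  exact ⟨u, hu, boundaryPos_of_bnd_eq hu⟩

theorem boundaryPos_of_isChosenLabel {v : H.V} {ℓ : Fin t} (hℓ : H.IsChosenLabel (.inl v) ℓ) :
    l (glueMapV G H hgl v) = G.boundaryPos (l ∘ .inl) ℓ := by
  obtain ⟨u, hu, hbu⟩ := exists_boundaryPos_eq hgl (by rw [hℓ.bnd_eq]; rfl) (l ∘ .inl)
  exact (congrArg l ((glueMapV_eq_inl_iff hgl).mpr ⟨ℓ, hℓ, hu⟩)).trans hbu.symm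

theorem encard_crossing_add_le_of_cutAt_le (hcut : ∀ i, ((glueHyp G H hgl).cutAt l i).encard ≤ k)
    (b : Fin t → ℝ) (c : LowerSet ℝ) :
    (crossing (G.gluedPos (l ∘ .inl) (H.labelPos (l ∘ glueMapV G H hgl) b)) c).encard +
      (crossing (H.privatePos (l ∘ glueMapV G H hgl)) c).encard ≤ k := by
  rw [← encard_crossing_edgePos_glueHyp hgl l b c]
  exact encard_crossing_le (fun y => BHyp.cutAt_eq_openCut l y ▸ hcut y) c

theorem apply_inl_ne_apply_glueMapV (hl : Function.Injective l) {v : G.V}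
    (hv : ∀ ℓ, G.bnd ℓ ≠ .inl v) (w : H.V) : l (.inl v) ≠ l (glueMapV G H hgl w) := by
  intro heq
  obtain ⟨ℓ, -, hℓ⟩ := (glueMapV_eq_inl_iff hgl).mp (hl heq).symm
  exact hv ℓ hℓ

theorem passes_test_of_layout (hl : Function.Injective l)
    (hcut : ∀ i, ((glueHyp G H hgl).cutAt l i).encard ≤ k)
    (C : Sweep (signature (H.privatePos (l ∘ glueMapV G H hgl))
      (H.labelPos (l ∘ glueMapV G H hgl) (G.boundaryPos (l ∘ .inl)))))
    (hk : ∀ c, (crossing (H.privatePos (l ∘ glueMapV G H hgl)) c).encard ≤ k) :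
    Passes G (C.test hk (G.boundaryPos (l ∘ .inl))) := by
  have hinl : Function.Injective (l ∘ .inl : G.V → ℝ) := hl.comp Sum.inl_injective
  refine C.passes_test hk _ hinl (fun ℓ v hv => ⟨(boundaryPos_of_bnd_eq hv).symm, ?_⟩)
    (fun v hv => ⟨?_, ?_⟩) (encard_crossing_add_le_of_cutAt_le hgl hcut _)
  · exact BHyp.labelPos_eq_singleton (by rw [← hgl ℓ, hv]; rfl)
  · rintro e ⟨w, -, hw⟩
    exact apply_inl_ne_apply_glueMapV hgl hl hv w hw.symm
  · rintro ℓ (⟨hℓ, hb⟩ | ⟨w, -, -, -, hw⟩)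
    · obtain ⟨u, hu, hbu⟩ := exists_boundaryPos_eq hgl hℓ (l ∘ .inl)
      exact hv ℓ (hinl (hbu.symm.trans hb) ▸ hu)
    · exact apply_inl_ne_apply_glueMapV hgl hl hv w hw.symm

theorem cutwidthAtMost_glueHyp_of_passes_imp {G₁ G₂ H : BHyp t} (h₁ : Gluable G₁ H)
    (h₂ : Gluable G₂ H) (htests : ∀ T : CwTest t k, Passes G₁ T → Passes G₂ T)
    (hw : (glueHyp G₁ H h₁).cutwidthAtMost k) : (glueHyp G₂ H h₂).cutwidthAtMost k := by
  obtain ⟨l, hl, hcut⟩ := hw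
  have hk (c) : (crossing (H.privatePos (l ∘ glueMapV G₁ H h₁)) c).encard ≤ k :=
    le_add_self.trans (encard_crossing_add_le_of_cutAt_le h₁ hcut (fun _ => 0) c)
  obtain ⟨C⟩ := Sweep.nonempty_signature hk
    (H.labelPos (l ∘ glueMapV G₁ H h₁) (G₁.boundaryPos (l ∘ .inl)))
  have hprivate {v : H.V} (hv : ∀ i, H.bnd i ≠ .inl v) : glueMapV G₁ H h₁ v = .inr ⟨v, hv⟩ :=
    (glueMapV_eq_inr_iff h₁).mpr rfl
  refine C.cutwidthAtMost_of_passes_test h₂ hk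
    (fun v ℓ => boundaryPos_of_isChosenLabel h₁) (fun v hv ℓ hℓ heq => ?_) (fun v hv w hw h => ?_)
    (htests _ (passes_test_of_layout h₁ hl hcut C hk))
  · obtain ⟨u, -, hu⟩ := exists_boundaryPos_eq h₁ hℓ (l ∘ .inl)
    have := hl (heq.trans hu)
    rw [hprivate hv] at this
    cases this
  · have := hl h
    rw [hprivate hv, hprivate hw] at this
    cases this
    rfl

end Exchange

end Glued

/-- if two `t`-boundaried hypergraphs pass exactly the same
cutwidth-`k` tests, then for every `t`-boundaried hypergraph `H`, the glued
hypergraph `G₁ ⊕ H` has cutwidth at most `k` iff `G₂ ⊕ H` does. -/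
theorem same_tests_same_cutwidth {t k : ℕ} (G₁ G₂ : BHyp t)
    (htests : ∀ T : CwTest t k, Passes G₁ T ↔ Passes G₂ T)
    (H : BHyp t) (h₁ : Gluable G₁ H) (h₂ : Gluable G₂ H) :
    ((glueHyp G₁ H h₁).cutwidthAtMost k ↔ (glueHyp G₂ H h₂).cutwidthAtMost k) :=
  ⟨cutwidthAtMost_glueHyp_of_passes_imp h₁ h₂ fun T => (htests T).mp,
    cutwidthAtMost_glueHyp_of_passes_imp h₂ h₁ fun T => (htests T).mpr⟩
end
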